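/- Under Assumption A, the Hausdorff dimension of the attractor and of the self-affine measure satisfy dim_H(Λ) = dim_H(ν) = 1 + log(Nc)/(−log b). -/

import Mathlib

open MeasureTheory Filter Set Topology
open scoped ENNReal

noncomputable section

/-- One triangular affine map `S_i(x,y) = (c x + u_i, d_i x + b y + v_i)`. -/
def Smap {N : ℕ} (c b : ℝ) (u v d : Fin N → ℝ) (i : Fin N) (p : ℝ × ℝ) : ℝ × ℝ :=
  (c * p.1 + u i, d i * p.1 + b * p.2 + v i)

/-- Composition along a finite word: `Sword [i₁,…,iₙ] = S_{i₁} ∘ ⋯ ∘ S_{iₙ}`. -/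
def Sword {N : ℕ} (c b : ℝ) (u v d : Fin N → ℝ) : List (Fin N) → (ℝ × ℝ) → ℝ × ℝ
  | [] => id
  | i :: w => Smap c b u v d i ∘ Sword c b u v d w

/-- The closed unit square `[0,1]²`. -/
def unitSq : Set (ℝ × ℝ) := Set.Icc 0 1 ×ˢ Set.Icc 0 1

/-- The length-`n` prefix of an infinite word, as a list. -/
def prefixWord {N : ℕ} (i : ℕ → Fin N) (n : ℕ) : List (Fin N) :=
  List.ofFn (fun k : Fin n => i k)

/-- The transversality condition: there is `c₃ > 0` such that for every `n` and all
`𝐢, 𝐣` with different first symbols, the projection to the `x`-axis of the intersection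
of the two level-`n` cylinder parallelograms has diameter `< c₃ bⁿ`. -/
def Transversality (N : ℕ) (c b : ℝ) (u v d : Fin N → ℝ) : Prop :=
  ∃ c₃ > (0 : ℝ), ∀ (n : ℕ) (i j : ℕ → Fin N), i 0 ≠ j 0 →
    Metric.diam (Prod.fst '' (Sword c b u v d (prefixWord i n) '' unitSq ∩
      Sword c b u v d (prefixWord j n) '' unitSq)) < c₃ * b ^ n

/-- `μ` is the uniform Bernoulli measure `(1/N,…,1/N)^ℕ` on the symbolic space. -/
def IsUniformBernoulli (N : ℕ) (μ : Measure (ℕ → Fin N)) : Prop :=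
  IsProbabilityMeasure μ ∧ ∀ (n : ℕ) (w : Fin n → Fin N),
    μ {x | ∀ k : Fin n, x (k : ℕ) = w k} = (1 / (N : ℝ≥0∞)) ^ n

/-- `m` is absolutely continuous w.r.t. Lebesgue measure with an `L^q` density. -/
def HasLqDensity (m : Measure ℝ) (q : ℝ) : Prop :=
  ∃ φ : ℝ → ℝ≥0∞, m = MeasureTheory.volume.withDensity φ ∧ (∫⁻ t, φ t ^ q) < ⊤

/-- The Hausdorff dimension of a measure: the infimum of Hausdorff dimensions
of sets of full measure. -/
def measureDimH {X : Type*} [EMetricSpace X] [MeasurableSpace X] (m : Measure X) : ℝ≥0∞ :=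
  ⨅ (A : Set X) (_ : m Aᶜ = 0), dimH A


/-- The standing hypotheses, bundled. -/
structure Hyp {N : ℕ} (b c : ℝ) (u v d : Fin N → ℝ) (Pi : (ℕ → Fin N) → ℝ × ℝ)
    (μ : Measure (ℕ → Fin N)) : Prop where
  hN : 2 ≤ N
  hb0 : 0 < b
  hc1 : c < 1
  hbc : b < c
  hNb : (N : ℝ) * b < 1
  hNc : 1 < (N : ℝ) * c
  hmaps : ∀ i, Smap c b u v d i '' unitSq ⊆ unitSq
  hPi : ∀ i, Tendsto (fun n => Sword c b u v d (prefixWord i n) 0) atTop (nhds (Pi i))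
  hμ : IsUniformBernoulli N μ

/-- The shift. -/
def sft {N : ℕ} (k : ℕ) (i : ℕ → Fin N) : ℕ → Fin N := fun m => i (m + k)

/-- cylinder sets -/
def cyl {N : ℕ} (n : ℕ) (i : ℕ → Fin N) : Set (ℕ → Fin N) := {j | ∀ m < n, j m = i m}

/-- strips -/
def strip {N : ℕ} (c b : ℝ) (u v d : Fin N → ℝ) (n : ℕ) (i : ℕ → Fin N) : Set (ℝ × ℝ) :=
  Sword c b u v d (prefixWord i n) '' unitSq

lemma Sword_append {N : ℕ} (c b : ℝ) (u v d : Fin N → ℝ) (w w' : List (Fin N)) :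
    Sword c b u v d (w ++ w') = Sword c b u v d w ∘ Sword c b u v d w' := by
  induction w with
  | nil => rfl
  | cons a w ih => simp [Sword, ih, Function.comp_assoc]

lemma prefixWord_add {N : ℕ} (i : ℕ → Fin N) (k m : ℕ) :
    prefixWord i (k + m) = prefixWord i k ++ prefixWord (sft k i) m := by
  unfold prefixWord sft
  rw [List.ofFn_add]
  congr 1
  apply congrArg
  funext x
  simp [Nat.add_comm]

lemma prefixWord_congr {N : ℕ} {i j : ℕ → Fin N} {n : ℕ} (h : j ∈ cyl n i) :
    prefixWord j n = prefixWord i n := by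
  unfold prefixWord
  apply congrArg
  funext x
  exact h x x.2

lemma prefixWord_length {N : ℕ} (i : ℕ → Fin N) (n : ℕ) : (prefixWord i n).length = n := by
  simp [prefixWord]

/-- iterated affine formula, with slope bound -/
lemma Sword_affine {N : ℕ} {b c : ℝ} (hb0 : 0 < b) (hbc : b < c) (u v d : Fin N → ℝ) :
    ∃ K > (0:ℝ), ∀ w : List (Fin N), ∃ U D V : ℝ, |D| ≤ K * c ^ w.length ∧
      ∀ p, Sword c b u v d w p = (c ^ w.length * p.1 + U, D * p.1 + b ^ w.length * p.2 + V) := by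
  obtain ⟨M, hM⟩ : ∃ M : ℝ, ∀ i, |d i| ≤ M := by
    refine ⟨∑ i, |d i|, fun i => ?_⟩
    exact Finset.single_le_sum (f := fun i => |d i|) (fun j _ => abs_nonneg (d j)) (Finset.mem_univ i)
  have hcb : 0 < c - b := by linarith
  have hc0 : 0 < c := by linarith
  refine ⟨(|M| + 1) / (c - b), by positivity, fun w => ?_⟩
  set K := (|M| + 1) / (c - b) with hK
  have hK' : K * c = |M| + 1 + b * K := by rw [hK]; field_simp; ring
  have hK0 : 0 < K := by positivity
  induction w with
  | nil => exact ⟨0, 0, 0, by simpa using hK0.le, fun p => by simp [Sword]⟩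
  | cons a w ih =>
    obtain ⟨U, D, V, hD, hS⟩ := ih
    refine ⟨c * U + u a, d a * c ^ w.length + b * D, d a * U + b * V + v a, ?_, fun p => ?_⟩
    · calc |d a * c ^ w.length + b * D| ≤ |d a * c ^ w.length| + |b * D| := abs_add_le _ _
        _ = |d a| * c ^ w.length + b * |D| := by
          rw [abs_mul, abs_mul, abs_of_pos hb0, abs_of_pos (pow_pos hc0 _)]
        _ ≤ (|M| + 1) * c ^ w.length + b * (K * c ^ w.length) := by
          have := hM a
          have h2 := le_abs_self M
          gcongr
          linarith
        _ = (K * c) * c ^ w.length := by rw [hK']; ring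
        _ = K * c ^ (a :: w).length := by rw [List.length_cons, pow_succ]; ring
    · simp only [Sword, Function.comp, hS, Smap, List.length_cons]
      ext <;> simp <;> ring

lemma mem_unitSq {p : ℝ × ℝ} : p ∈ unitSq ↔ (0 ≤ p.1 ∧ p.1 ≤ 1) ∧ (0 ≤ p.2 ∧ p.2 ≤ 1) := Iff.rfl

lemma isClosed_unitSq : IsClosed unitSq := isClosed_Icc.prod isClosed_Icc

lemma isCompact_unitSq : IsCompact unitSq := isCompact_Icc.prod isCompact_Icc

/-- Deep points -/
def deep (h : ℝ) (p : ℝ × ℝ) : Prop := (h ≤ p.1 ∧ p.1 ≤ 1 - h) ∧ (h ≤ p.2 ∧ p.2 ≤ 1 - h)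

section basics
variable {N : ℕ} {b c : ℝ} {u v d : Fin N → ℝ} {Pi : (ℕ → Fin N) → ℝ × ℝ}
    {μ : Measure (ℕ → Fin N)}

lemma Hyp.hc0 (H : Hyp b c u v d Pi μ) : 0 < c := H.hb0.trans H.hbc
lemma Hyp.hb1 (H : Hyp b c u v d Pi μ) : b < 1 := H.hbc.trans H.hc1

lemma Hyp.Sword_mem (H : Hyp b c u v d Pi μ) (w : List (Fin N)) {p : ℝ × ℝ} (hp : p ∈ unitSq) :
    Sword c b u v d w p ∈ unitSq := by
  induction w with
  | nil => exact hp
  | cons a w ih => exact H.hmaps a ⟨_, ih, rfl⟩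

lemma continuous_Sword (c b : ℝ) (u v d : Fin N → ℝ) (w : List (Fin N)) :
    Continuous (Sword c b u v d w) := by
  induction w with
  | nil => exact continuous_id
  | cons a w ih =>
    have : Continuous (Smap c b u v d a) := by unfold Smap; fun_prop
    exact this.comp ih

lemma zero_mem_unitSq : (0 : ℝ × ℝ) ∈ unitSq := by simp [mem_unitSq]

lemma Hyp.Pi_mem (H : Hyp b c u v d Pi μ) (i : ℕ → Fin N) : Pi i ∈ unitSq :=
  isClosed_unitSq.mem_of_tendsto (H.hPi i)
    (Eventually.of_forall fun _ => H.Sword_mem _ zero_mem_unitSq)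

lemma Hyp.Pi_eq (H : Hyp b c u v d Pi μ) (n : ℕ) (i : ℕ → Fin N) :
    Pi i = Sword c b u v d (prefixWord i n) (Pi (sft n i)) := by
  have h1 := H.hPi (sft n i)
  have h2 := ((continuous_Sword c b u v d (prefixWord i n)).tendsto _).comp h1
  have h3 := (H.hPi i).comp (tendsto_add_atTop_nat n)
  refine tendsto_nhds_unique h3 (h2.congr fun m => ?_)
  simp only [Function.comp]
  rw [Nat.add_comm m n, prefixWord_add, Sword_append]; rfl

lemma Hyp.Pi_mem_strip (H : Hyp b c u v d Pi μ) (n : ℕ) (i : ℕ → Fin N) :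
    Pi i ∈ strip c b u v d n i := ⟨_, H.Pi_mem (sft n i), (H.Pi_eq n i).symm⟩

lemma strip_congr {i j : ℕ → Fin N} {n : ℕ} (h : j ∈ cyl n i) :
    strip c b u v d n j = strip c b u v d n i := by
  unfold strip; rw [prefixWord_congr h]

/-- x-coordinate formula -/
lemma Sword_fst (c b : ℝ) (u v d : Fin N → ℝ) (w : List (Fin N)) :
    ∃ U : ℝ, ∀ p, (Sword c b u v d w p).1 = c ^ w.length * p.1 + U := by
  induction w with
  | nil => exact ⟨0, fun p => by simp [Sword]⟩
  | cons a w ih =>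
    obtain ⟨U, hU⟩ := ih
    refine ⟨c * U + u a, fun p => ?_⟩
    simp only [Sword, Function.comp, Smap, hU, List.length_cons]; ring

lemma Hyp.X_eq (H : Hyp b c u v d Pi μ) (n : ℕ) (i : ℕ → Fin N) :
    ∃ U : ℝ, ∀ j ∈ cyl n i, (Pi j).1 = c ^ n * (Pi (sft n j)).1 + U := by
  obtain ⟨U, hU⟩ := Sword_fst c b u v d (prefixWord i n)
  refine ⟨U, fun j hj => ?_⟩
  rw [H.Pi_eq n j, prefixWord_congr hj, hU, prefixWord_length]

lemma strip_fst_le (hc0 : 0 < c) (n : ℕ) (i : ℕ → Fin N) {z z' : ℝ × ℝ}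
    (hz : z ∈ strip c b u v d n i) (hz' : z' ∈ strip c b u v d n i) : |z.1 - z'.1| ≤ c ^ n := by
  obtain ⟨p, hp, rfl⟩ := hz
  obtain ⟨p', hp', rfl⟩ := hz'
  obtain ⟨U, hU⟩ := Sword_fst c b u v d (prefixWord i n)
  rw [hU, hU, prefixWord_length]
  have : c ^ n * p.1 + U - (c ^ n * p'.1 + U) = c ^ n * (p.1 - p'.1) := by ring
  rw [this, abs_mul, abs_of_pos (pow_pos hc0 n)]
  rw [mem_unitSq] at hp hp'
  have : |p.1 - p'.1| ≤ 1 := by rw [abs_le]; constructor <;> linarith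
  have h2 := pow_pos hc0 n
  nlinarith

lemma Sword_injective (hb0 : 0 < b) (hc0 : 0 < c) (w : List (Fin N)) :
    Function.Injective (Sword c b u v d w) := by
  induction w with
  | nil => exact Function.injective_id
  | cons a w ih =>
    refine Function.Injective.comp ?_ ih
    intro p q h
    simp only [Smap, Prod.mk.injEq] at h
    obtain ⟨h1, h2⟩ := h
    have h3 : p.1 = q.1 := by
      have : c * p.1 = c * q.1 := by linarith
      exact mul_left_cancel₀ hc0.ne' this
    rw [h3] at h2
    have h4 : p.2 = q.2 := by
      have : b * p.2 = b * q.2 := by linarith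
      exact mul_left_cancel₀ hb0.ne' this
    exact Prod.ext h3 h4

/-- Transversality for words with a common prefix. -/
lemma Hyp.trans_prefix (H : Hyp b c u v d Pi μ) {c₃ : ℝ}
    (h3 : ∀ (n : ℕ) (i j : ℕ → Fin N), i 0 ≠ j 0 →
    Metric.diam (Prod.fst '' (Sword c b u v d (prefixWord i n) '' unitSq ∩
      Sword c b u v d (prefixWord j n) '' unitSq)) < c₃ * b ^ n)
    (k m : ℕ) (i j : ℕ → Fin N) (hij : j ∈ cyl k i) (hne : i k ≠ j k) (z z' : ℝ × ℝ)
    (hz : z ∈ strip c b u v d (k + m) i) (hz2 : z ∈ strip c b u v d (k + m) j)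
    (hz' : z' ∈ strip c b u v d (k + m) i) (hz2' : z' ∈ strip c b u v d (k + m) j) :
    |z.1 - z'.1| ≤ c₃ * c ^ k * b ^ m := by
  have hc0 := H.hc0
  have key : ∀ y, y ∈ strip c b u v d (k + m) i → y ∈ strip c b u v d (k + m) j →
      ∃ p, p ∈ strip c b u v d m (sft k i) ∩ strip c b u v d m (sft k j) ∧
        y = Sword c b u v d (prefixWord i k) p := by
    rintro y ⟨p, hp, rfl⟩ ⟨q, hq, hqe⟩
    rw [prefixWord_add, prefixWord_add, Sword_append, Sword_append, prefixWord_congr hij] at hqe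
    have := Sword_injective H.hb0 hc0 _ hqe
    refine ⟨_, ⟨⟨p, hp, rfl⟩, ⟨q, hq, this⟩⟩, ?_⟩
    rw [prefixWord_add, Sword_append]; rfl
  obtain ⟨p, hp, rfl⟩ := key z hz hz2
  obtain ⟨p', hp', rfl⟩ := key z' hz' hz2'
  obtain ⟨U, hU⟩ := Sword_fst c b u v d (prefixWord i k)
  rw [hU, hU, prefixWord_length]
  have e : c ^ k * p.1 + U - (c ^ k * p'.1 + U) = c ^ k * (p.1 - p'.1) := by ring
  rw [e, abs_mul, abs_of_pos (pow_pos hc0 k)]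
  have h0 : (sft k i) 0 ≠ (sft k j) 0 := by simpa [sft] using hne
  have hd := h3 m (sft k i) (sft k j) h0
  have hbd : Bornology.IsBounded (Prod.fst '' (strip c b u v d m (sft k i) ∩ strip c b u v d m (sft k j))) := by
    refine (Metric.isBounded_Icc (0:ℝ) 1).subset ?_
    rintro _ ⟨q, ⟨⟨q', hq', rfl⟩, _⟩, rfl⟩
    exact (H.Sword_mem _ hq').1
  have := Metric.dist_le_diam_of_mem hbd ⟨p, hp, rfl⟩ ⟨p', hp', rfl⟩
  rw [Real.dist_eq] at this
  have h5 : |p.1 - p'.1| ≤ c₃ * b ^ m := this.trans hd.le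
  calc c ^ k * |p.1 - p'.1| ≤ c ^ k * (c₃ * b ^ m) := by gcongr
    _ = _ := by ring

/-- nearby points of a deep point lie in the strip -/
lemma Hyp.mem_strip_of_deep (H : Hyp b c u v d Pi μ) : ∃ K > (0:ℝ), ∀ (l : ℕ) (j : ℕ → Fin N)
    (δ : ℝ) (z : ℝ × ℝ), deep δ (Pi (sft l j)) → dist z (Pi j) ≤ δ * b ^ l / K →
    z ∈ strip c b u v d l j := by
  obtain ⟨K, hK, hA⟩ := Sword_affine H.hb0 H.hbc u v d
  refine ⟨1 + K, by positivity, fun l j δ z hdp hz => ?_⟩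
  obtain ⟨U, D, V, hD, hS⟩ := hA (prefixWord j l)
  rw [prefixWord_length] at hD hS
  have hc := pow_pos H.hc0 l
  have hb := pow_pos H.hb0 l
  have hbc : b ^ l ≤ c ^ l := pow_le_pow_left₀ H.hb0.le H.hbc.le l
  set p := Pi (sft l j) with hp
  have hPj : Pi j = (c ^ l * p.1 + U, D * p.1 + b ^ l * p.2 + V) := by rw [H.Pi_eq l j, hS]
  rw [Prod.dist_eq, max_le_iff, Real.dist_eq, Real.dist_eq, hPj] at hz
  simp only at hz
  obtain ⟨hz1, hz2⟩ := hz
  set dx := z.1 - (c ^ l * p.1 + U) with hdx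
  set dy := z.2 - (D * p.1 + b ^ l * p.2 + V) with hdy
  set r := δ * b ^ l / (1 + K) with hr
  have hrδ : r * (1 + K) = δ * b ^ l := by rw [hr]; field_simp
  have hr0 : 0 ≤ r := (abs_nonneg _).trans hz1
  have a1 : |dx / c ^ l| ≤ δ := by
    rw [abs_div, abs_of_pos hc, div_le_iff₀ hc]
    have : 0 ≤ δ := by
      by_contra hneg; push Not at hneg
      have : δ * b ^ l < 0 := mul_neg_of_neg_of_pos hneg hb
      nlinarith
    nlinarith
  have a2 : |(dy - D * (dx / c ^ l)) / b ^ l| ≤ δ := by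
    rw [abs_div, abs_of_pos hb, div_le_iff₀ hb]
    have : |D * (dx / c ^ l)| ≤ K * r := by
      rw [abs_mul, abs_div, abs_of_pos hc]
      calc |D| * (|dx| / c ^ l) ≤ K * c ^ l * (r / c ^ l) := by gcongr
        _ = K * r := by field_simp
    calc |dy - D * (dx / c ^ l)| ≤ |dy| + |D * (dx / c ^ l)| := abs_sub _ _
      _ ≤ r + K * r := by gcongr
      _ = _ := by linarith
  obtain ⟨⟨e1, e2⟩, e3, e4⟩ := hdp
  rw [abs_le] at a1 a2
  refine ⟨(p.1 + dx / c ^ l, p.2 + (dy - D * (dx / c ^ l)) / b ^ l), ?_, ?_⟩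
  · rw [mem_unitSq]
    refine ⟨⟨?_, ?_⟩, ?_, ?_⟩ <;> simp only <;> linarith [a1.1, a1.2, a2.1, a2.2]
  · rw [hS]
    ext
    · simp only; rw [mul_add, mul_div_cancel₀ _ hc.ne']; rw [hdx]; ring
    · simp only; rw [mul_add (b ^ l), mul_div_cancel₀ _ hb.ne']; rw [hdy]; ring

lemma Hyp.deep_Smap (H : Hyp b c u v d Pi μ) (a : Fin N) {p : ℝ × ℝ} (hp : p ∈ unitSq) {h : ℝ}
    (h0 : 0 ≤ h) (hd : deep h p) : deep (b * h) (Smap c b u v d a p) := by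
  have m0 := mem_unitSq.1 (H.hmaps a ⟨(0, 0), by simp [mem_unitSq], rfl⟩)
  have m1 := mem_unitSq.1 (H.hmaps a ⟨(1, 0), by simp [mem_unitSq], rfl⟩)
  have m2 := mem_unitSq.1 (H.hmaps a ⟨(p.1, 0), by
    rw [mem_unitSq] at hp ⊢; simpa using hp.1, rfl⟩)
  have m3 := mem_unitSq.1 (H.hmaps a ⟨(p.1, 1), by
    rw [mem_unitSq] at hp ⊢; simpa using hp.1, rfl⟩)
  simp only [Smap] at m0 m1 m2 m3
  have hb := H.hb0
  have hbc := H.hbc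
  obtain ⟨⟨e1, e2⟩, e3, e4⟩ := hd
  refine ⟨⟨?_, ?_⟩, ?_, ?_⟩ <;> simp only [Smap] <;> nlinarith

lemma Hyp.deep_Sword (H : Hyp b c u v d Pi μ) (w : List (Fin N)) {p : ℝ × ℝ} (hp : p ∈ unitSq)
    {h : ℝ} (h0 : 0 ≤ h) (hd : deep h p) : deep (b ^ w.length * h) (Sword c b u v d w p) := by
  induction w with
  | nil => simpa [Sword] using hd
  | cons a w ih =>
    have := H.deep_Smap a (H.Sword_mem w hp) (mul_nonneg (pow_nonneg H.hb0.le _) h0) ih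
    rw [List.length_cons, pow_succ']
    rw [← mul_assoc] at this
    exact this

end basics

section meas
variable {N : ℕ} {b c : ℝ} {u v d : Fin N → ℝ} {Pi : (ℕ → Fin N) → ℝ × ℝ}
    {μ : Measure (ℕ → Fin N)}

/-- cylinder given by a finite word -/
def cylF {n : ℕ} (w : Fin n → Fin N) : Set (ℕ → Fin N) := {x | ∀ k : Fin n, x (k : ℕ) = w k}

lemma cyl_eq (n : ℕ) (i : ℕ → Fin N) : cyl n i = cylF (fun k : Fin n => i k) := by
  ext x; simp only [cyl, cylF, mem_ofPred_eq]
  exact ⟨fun h k => h k k.2, fun h m hm => h ⟨m, hm⟩⟩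

lemma cylF_eq {n : ℕ} {w : Fin n → Fin N} {i : ℕ → Fin N} (hi : i ∈ cylF w) : cylF w = cyl n i := by
  rw [cyl_eq]; congr 1; funext k; exact (hi k).symm

lemma measurableSet_cylF {n : ℕ} (w : Fin n → Fin N) : MeasurableSet (cylF w) := by
  have : cylF w = ⋂ k : Fin n, (fun x : ℕ → Fin N => x k) ⁻¹' {w k} := by
    ext x; simp [cylF]
  rw [this]
  exact MeasurableSet.iInter fun k => measurable_pi_apply _ (measurableSet_singleton _)

lemma measurable_sft (k : ℕ) : Measurable (sft k : (ℕ → Fin N) → ℕ → Fin N) :=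
  measurable_pi_lambda _ fun _ => measurable_pi_apply _

lemma generateFrom_cyl : (MeasurableSpace.pi : MeasurableSpace (ℕ → Fin N)) =
    MeasurableSpace.generateFrom {s | ∃ (n : ℕ) (w : Fin n → Fin N), s = cylF w} := by
  apply le_antisymm
  · refine iSup_le fun m => ?_
    rw [← measurable_iff_comap_le]
    refine @measurable_to_countable' _ _ _ _ (_) _ fun a => ?_
    have : (fun x : ℕ → Fin N => x m) ⁻¹' {a} =
        ⋃ w : {w : Fin (m + 1) → Fin N // w (Fin.last m) = a}, cylF w.1 := by
      ext x
      simp only [mem_preimage, mem_singleton_iff, mem_iUnion]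
      constructor
      · intro h
        exact ⟨⟨fun k => x k, by simpa using h⟩, fun k => rfl⟩
      · rintro ⟨⟨w, hw⟩, h⟩
        have := h (Fin.last m)
        simp only [Fin.val_last] at this
        rw [this, hw]
    rw [this]
    refine @MeasurableSet.iUnion _ _ (_) _ _ fun w => ?_
    exact MeasurableSpace.measurableSet_generateFrom ⟨_, _, rfl⟩
  · apply MeasurableSpace.generateFrom_le
    rintro _ ⟨n, w, rfl⟩
    exact measurableSet_cylF w

lemma isPiSystem_cyl : IsPiSystem {s : Set (ℕ → Fin N) | ∃ (n : ℕ) (w : Fin n → Fin N), s = cylF w} := by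
  rintro _ ⟨n, w, rfl⟩ _ ⟨m, w', rfl⟩ ⟨x, hx, hx'⟩
  rw [cylF_eq hx, cylF_eq hx']
  refine ⟨max n m, fun k => x k, ?_⟩
  rw [← cyl_eq]
  ext y
  simp only [cyl, mem_inter_iff, mem_ofPred_eq, lt_max_iff]
  exact ⟨fun h k hk => hk.elim (h.1 k) (h.2 k), fun h => ⟨fun k hk => h k (.inl hk), fun k hk => h k (.inr hk)⟩⟩

lemma Hyp.prob (H : Hyp b c u v d Pi μ) : IsProbabilityMeasure μ := H.hμ.1

lemma Hyp.measure_cylF (H : Hyp b c u v d Pi μ) {n : ℕ} (w : Fin n → Fin N) :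
    μ (cylF w) = (1 / (N : ℝ≥0∞)) ^ n := H.hμ.2 n w

lemma Hyp.measure_cyl (H : Hyp b c u v d Pi μ) (n : ℕ) (i : ℕ → Fin N) :
    μ (cyl n i) = (1 / (N : ℝ≥0∞)) ^ n := by rw [cyl_eq, H.measure_cylF]

/-- concatenation -/
def cat {n : ℕ} (w : Fin n → Fin N) (i : ℕ → Fin N) : ℕ → Fin N :=
  fun m => if h : m < n then w ⟨m, h⟩ else i (m - n)

lemma cat_mem {n : ℕ} (w : Fin n → Fin N) (i : ℕ → Fin N) : cat w i ∈ cylF w := by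
  intro k; simp [cat]

lemma sft_cat {n : ℕ} (w : Fin n → Fin N) (i : ℕ → Fin N) : sft n (cat w i) = i := by
  funext m; simp [cat, sft]

lemma sft_sft (k l : ℕ) (i : ℕ → Fin N) : sft k (sft l i) = sft (k + l) i := by
  funext m; simp [sft, add_assoc]

lemma cylF_cat_inter {n m : ℕ} (w : Fin n → Fin N) (i : ℕ → Fin N) :
    cylF w ∩ sft n ⁻¹' (cyl m i) = cyl (n + m) (cat w i) := by
  rw [cylF_eq (cat_mem w i)]
  ext x
  simp only [cyl, mem_inter_iff, mem_ofPred_eq, mem_preimage]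
  constructor
  · rintro ⟨h1, h2⟩ k hk
    by_cases hkn : k < n
    · exact h1 k hkn
    · have := h2 (k - n) (by omega)
      simp only [sft] at this
      rw [Nat.sub_add_cancel (by omega)] at this
      rw [this]; simp [cat, hkn]
  · intro h
    refine ⟨fun k hk => h k (by omega), fun k hk => ?_⟩
    have := h (k + n) (by omega)
    simp only [sft]; rw [this]; simp [cat]

lemma Hyp.indep (H : Hyp b c u v d Pi μ) {n : ℕ} (w : Fin n → Fin N) {B : Set (ℕ → Fin N)}
    (hB : MeasurableSet B) : μ (cylF w ∩ sft n ⁻¹' B) = (1 / (N : ℝ≥0∞)) ^ n * μ B := by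
  have := H.prob
  have hN0 : (1 / (N : ℝ≥0∞)) ^ n ≠ ⊤ := by
    rw [← H.measure_cylF w]; exact measure_ne_top _ _
  have e : (μ.restrict (cylF w)).map (sft n) = (1 / (N : ℝ≥0∞)) ^ n • μ := by
    refine ext_of_generate_finite _ generateFrom_cyl isPiSystem_cyl ?_ ?_
    · rintro _ ⟨m, w', rfl⟩
      rw [Measure.map_apply (measurable_sft n) (measurableSet_cylF w'),
        Measure.restrict_apply (measurable_sft n (measurableSet_cylF w')), inter_comm]
      rcases (cylF w').eq_empty_or_nonempty with h | ⟨i, hi⟩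
      · simp [h]
      · rw [cylF_eq hi, cylF_cat_inter, Measure.smul_apply, smul_eq_mul, H.measure_cyl, H.measure_cyl, pow_add]
    · rw [Measure.map_apply (measurable_sft n) .univ]
      simp [H.measure_cylF]
  have := congrArg (fun m => m B) e
  simp only [Measure.smul_apply, smul_eq_mul] at this
  rw [← this, Measure.map_apply (measurable_sft n) hB,
        Measure.restrict_apply (measurable_sft n hB), inter_comm]

lemma measure_eq_sum_cyl (n : ℕ) {E : Set (ℕ → Fin N)} (hE : MeasurableSet E) :
    μ E = ∑ w : Fin n → Fin N, μ (cylF w ∩ E) := by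
  have : E = ⋃ w : Fin n → Fin N, cylF w ∩ E := by
    ext x
    simp only [mem_iUnion, mem_inter_iff]
    exact ⟨fun h => ⟨fun k => x k, fun k => rfl, h⟩, fun ⟨_, _, h⟩ => h⟩
  conv_lhs => rw [this]
  rw [measure_iUnion _ (fun w => (measurableSet_cylF w).inter hE), tsum_fintype]
  intro w w' hne
  rw [Function.onFun, Set.disjoint_left]
  rintro x ⟨h1, _⟩ ⟨h2, _⟩
  exact hne (funext fun k => (h1 k).symm.trans (h2 k))

lemma Hyp.Npow (H : Hyp b c u v d Pi μ) (n : ℕ) : (N : ℝ≥0∞) ^ n * (1 / (N : ℝ≥0∞)) ^ n = 1 := by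
  have h0 : (N : ℝ≥0∞) ≠ 0 := by have := H.hN; simp; omega
  rw [← mul_pow, one_div, ENNReal.mul_inv_cancel h0 (by simp), one_pow]

lemma Hyp.inv (H : Hyp b c u v d Pi μ) (k : ℕ) {B : Set (ℕ → Fin N)} (hB : MeasurableSet B) :
    μ (sft k ⁻¹' B) = μ B := by
  rw [measure_eq_sum_cyl k (measurable_sft k hB)]
  simp_rw [H.indep _ hB]
  rw [Finset.sum_const, Finset.card_univ]
  simp only [Fintype.card_fun, Fintype.card_fin, nsmul_eq_mul, Nat.cast_pow]
  rw [← mul_assoc, H.Npow, one_mul]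

lemma measurable_prefix_fun {α : Type*} [MeasurableSpace α] (n : ℕ) (f : List (Fin N) → α) :
    Measurable (fun i : ℕ → Fin N => f (prefixWord i n)) := by
  have h1 : Measurable (fun i : ℕ → Fin N => fun k : Fin n => i k) :=
    measurable_pi_lambda _ fun _ => measurable_pi_apply _
  exact (measurable_of_finite (fun w : Fin n → Fin N => f (List.ofFn w))).comp h1

lemma continuous_prefix_fun {α : Type*} [TopologicalSpace α] (n : ℕ) (f : List (Fin N) → α) :
    Continuous (fun i : ℕ → Fin N => f (prefixWord i n)) := by
  have h1 : Continuous (fun i : ℕ → Fin N => fun k : Fin n => i k) :=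
    continuous_pi fun _ => continuous_apply _
  exact (continuous_of_discreteTopology (f := fun w : Fin n → Fin N => f (List.ofFn w))).comp h1

lemma Hyp.measurable_Pi (H : Hyp b c u v d Pi μ) : Measurable Pi := by
  refine measurable_of_tendsto_metrizable (fun n => measurable_prefix_fun n (fun w => Sword c b u v d w 0)) ?_
  rw [tendsto_pi_nhds]
  exact H.hPi

lemma Hyp.continuous_Pi (H : Hyp b c u v d Pi μ) : Continuous Pi := by
  obtain ⟨K, hK, hA⟩ := Sword_affine H.hb0 H.hbc u v d
  have hu : TendstoUniformly (fun n i => Sword c b u v d (prefixWord i n) 0) Pi atTop := by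
    rw [Metric.tendstoUniformly_iff]
    intro ε hε
    have ht : Tendsto (fun n => (K + 1) * c ^ n) atTop (𝓝 ((K + 1) * 0)) :=
      (tendsto_pow_atTop_nhds_zero_of_lt_one H.hc0.le H.hc1).const_mul _
    rw [mul_zero] at ht
    filter_upwards [ht.eventually_lt_const hε] with n hn i
    refine lt_of_le_of_lt ?_ hn
    rw [H.Pi_eq n i]
    obtain ⟨U, D, V, hD, hS⟩ := hA (prefixWord i n)
    rw [prefixWord_length] at hD hS
    rw [hS, hS, Prod.dist_eq, max_le_iff, Real.dist_eq, Real.dist_eq]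
    have hm := mem_unitSq.1 (H.Pi_mem (sft n i))
    set p := Pi (sft n i)
    have hc := pow_pos H.hc0 n
    have hb := pow_pos H.hb0 n
    have hbc : b ^ n ≤ c ^ n := pow_le_pow_left₀ H.hb0.le H.hbc.le n
    simp only [Prod.fst_zero, Prod.snd_zero, mul_zero, zero_add, add_sub_cancel_right]
    constructor
    · rw [abs_mul, abs_of_pos hc, abs_of_nonneg hm.1.1]
      nlinarith [mul_pos hK hc]
    · calc |D * p.1 + b ^ n * p.2| ≤ |D * p.1| + |b ^ n * p.2| := abs_add_le _ _
        _ = |D| * p.1 + b ^ n * p.2 := by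
          rw [abs_mul, abs_mul, abs_of_pos hb, abs_of_nonneg hm.1.1, abs_of_nonneg hm.2.1]
        _ ≤ K * c ^ n * 1 + c ^ n * 1 := by
          gcongr
          · exact hm.1.1
          · exact hm.1.2
          · exact hm.2.1
          · exact hm.2.2
        _ = _ := by ring
  exact hu.continuous (Eventually.of_forall fun n =>
    continuous_prefix_fun n (fun w => Sword c b u v d w 0)).frequently

lemma Hyp.isCompact_range (H : Hyp b c u v d Pi μ) : IsCompact (Set.range Pi) :=
  _root_.isCompact_range H.continuous_Pi

end meas

section dens

lemma density_meas {m : Measure ℝ} [IsProbabilityMeasure m] {q : ℝ} (hq : 1 < q)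
    (h : HasLqDensity m q) : ∃ φ : ℝ → ℝ≥0∞, Measurable φ ∧ m = volume.withDensity φ ∧
      (∫⁻ t, φ t ^ q) < ⊤ := by
  obtain ⟨φ, hm, hφ⟩ := h
  obtain ⟨g, hg, hgφ, hintg⟩ := exists_measurable_le_lintegral_eq volume φ
  refine ⟨g, hg, ?_, ?_⟩
  · have htot : ∫⁻ t, φ t = 1 := by
      have : m univ = 1 := measure_univ
      rw [hm, withDensity_apply _ .univ, Measure.restrict_univ] at this
      exact this
    rw [hm]
    ext s hs
    rw [withDensity_apply _ hs, withDensity_apply _ hs]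
    apply le_antisymm _ (lintegral_mono hgφ)
    have h1 := lintegral_add_compl φ hs (μ := volume)
    have h2 := lintegral_add_compl g hs (μ := volume)
    rw [← hintg, ← h1] at h2
    have h3 : ∫⁻ x in sᶜ, g x ≤ ∫⁻ x in sᶜ, φ x := lintegral_mono hgφ
    have h4 : ∫⁻ x in sᶜ, φ x ≠ ⊤ := by
      intro h; rw [h, add_top, htot] at h1; simp at h1
    by_contra hlt
    push Not at hlt
    have := ENNReal.add_lt_add_of_lt_of_le (ne_top_of_le_ne_top h4 h3) hlt h3
    exact this.ne h2
  · refine lt_of_le_of_lt (lintegral_mono fun t => ?_) hφ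
    exact ENNReal.rpow_le_rpow (hgφ t) (by linarith)

lemma measure_le_of_density {m : Measure ℝ} {q : ℝ} (hq : 1 < q) {φ : ℝ → ℝ≥0∞} (hφ : Measurable φ)
    (hm : m = volume.withDensity φ) {T : ℝ} (hT : 0 < T) {A : Set ℝ} (hA : MeasurableSet A) :
    m A ≤ ENNReal.ofReal T * volume A + ENNReal.ofReal (T ^ (1 - q)) * ∫⁻ t, φ t ^ q := by
  rw [hm, withDensity_apply _ hA]
  have hpt : ∀ t, φ t ≤ ENNReal.ofReal T + ENNReal.ofReal (T ^ (1 - q)) * φ t ^ q := by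
    intro t
    rcases le_total (φ t) (ENNReal.ofReal T) with h | h
    · exact h.trans le_self_add
    · refine le_trans ?_ le_add_self
      rcases eq_or_ne (φ t) ⊤ with ht | ht
      · rw [ht, ENNReal.top_rpow_of_pos (by linarith), ENNReal.mul_top]
        simpa using Real.rpow_pos_of_pos hT _
      · have h0 : φ t ≠ 0 := by
          intro h0; rw [h0] at h; simp at h; linarith
        rw [← ENNReal.ofReal_rpow_of_pos hT]
        calc φ t = φ t ^ (1 - q) * φ t ^ q := by
              rw [← ENNReal.rpow_add _ _ h0 ht]; simp
          _ ≤ _ := by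
              gcongr ?_ * _
              rw [show 1 - q = -(q - 1) by ring, ENNReal.rpow_neg, ENNReal.rpow_neg, ENNReal.inv_le_inv]
              exact ENNReal.rpow_le_rpow h (by linarith)
  calc ∫⁻ t in A, φ t ≤ ∫⁻ t in A, (ENNReal.ofReal T + ENNReal.ofReal (T ^ (1 - q)) * φ t ^ q) :=
        lintegral_mono hpt
    _ = ENNReal.ofReal T * volume A + ENNReal.ofReal (T ^ (1 - q)) * ∫⁻ t in A, φ t ^ q := by
        rw [lintegral_add_left measurable_const, lintegral_const_mul _ (hφ.pow_const q)]
        simp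
    _ ≤ _ := by gcongr _ + _ * ?_; exact setLIntegral_le_lintegral _ _

lemma measurable_ball_measure {m : Measure ℝ} [IsProbabilityMeasure m] (ρ : ℝ) :
    Measurable fun t => m (Metric.closedBall t ρ) := by
  have : MeasurableSet {p : ℝ × ℝ | dist p.2 p.1 ≤ ρ} :=
    (isClosed_le (by fun_prop) (by fun_prop)).measurableSet
  exact measurable_measure_prodMk_left (ν := m) this

lemma volume_ball_large {m : Measure ℝ} [IsProbabilityMeasure m] {M ρ : ℝ} (hM : 0 < M) (hρ : 0 < ρ) :
    volume {t | ENNReal.ofReal (M * ρ) < m (Metric.closedBall t ρ)} ≤ ENNReal.ofReal (2 / M) := by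
  have hmeas : MeasurableSet {p : ℝ × ℝ | dist p.2 p.1 ≤ ρ} :=
    (isClosed_le (by fun_prop) (by fun_prop)).measurableSet
  have h1 := mul_meas_ge_le_lintegral (μ := volume) (measurable_ball_measure (m := m) ρ) (ENNReal.ofReal (M * ρ))
  have h2 : ∫⁻ t, m (Metric.closedBall t ρ) = ENNReal.ofReal (2 * ρ) := by
    have e1 := Measure.prod_apply (μ := (volume : Measure ℝ)) (ν := m) hmeas
    have e2 := Measure.prod_apply_symm (μ := (volume : Measure ℝ)) (ν := m) hmeas
    rw [e1] at e2
    refine Eq.trans e2 ?_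
    have : ∀ y : ℝ, volume ((fun x => (x, y)) ⁻¹' {p : ℝ × ℝ | dist p.2 p.1 ≤ ρ}) = ENNReal.ofReal (2 * ρ) := by
      intro y
      have : ((fun x : ℝ => (x, y)) ⁻¹' {p : ℝ × ℝ | dist p.2 p.1 ≤ ρ}) = Metric.closedBall y ρ := by
        ext x; simp [dist_comm]
      rw [this, Real.volume_closedBall]
    rw [lintegral_congr this]; simp
  rw [h2] at h1
  have hpos : 0 < M * ρ := by positivity
  have h3 : ENNReal.ofReal (2 / M) = ENNReal.ofReal (2 * ρ) / ENNReal.ofReal (M * ρ) := by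
    rw [← ENNReal.ofReal_div_of_pos hpos]; congr 1; field_simp
  rw [h3, ENNReal.le_div_iff_mul_le (.inl (by simpa using hpos)) (.inl (by simp)), mul_comm]
  refine le_trans ?_ h1
  gcongr
  exact fun ht => le_of_lt ht

lemma volume_dens_large {m : Measure ℝ} [IsProbabilityMeasure m] {φ : ℝ → ℝ≥0∞} (hφ : Measurable φ)
    (hm : m = volume.withDensity φ) {M : ℝ} (hM : 0 < M) :
    volume {t | ENNReal.ofReal M < φ t} ≤ ENNReal.ofReal (2 / M) := by
  have h1 := mul_meas_ge_le_lintegral (μ := volume) hφ (ENNReal.ofReal M)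
  have htot : ∫⁻ t, φ t = 1 := by
    have : m univ = 1 := measure_univ
    rw [hm, withDensity_apply _ .univ, Measure.restrict_univ] at this
    exact this
  rw [htot] at h1
  have h4 : ENNReal.ofReal (2 / M) = 2 / ENNReal.ofReal M := by
    rw [ENNReal.ofReal_div_of_pos hM]; simp
  rw [h4, ENNReal.le_div_iff_mul_le (.inl (by simpa using hM)) (.inl (by simp)), mul_comm]
  refine le_trans ?_ (h1.trans (by norm_num))
  gcongr
  exact fun ht => le_of_lt ht

/-- measure of sets of small Lebesgue measure, geometric form -/
lemma geom_bound {m : Measure ℝ} [IsProbabilityMeasure m] {q : ℝ} (hq : 1 < q) {φ : ℝ → ℝ≥0∞}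
    (hφ : Measurable φ) (hm : m = volume.withDensity φ) (hfin : (∫⁻ t, φ t ^ q) < ⊤)
    {τ : ℝ} (hτ : 1 < τ) : ∃ κ : ℝ≥0∞, κ < 1 ∧ ∃ C : ℝ≥0∞, C ≠ ⊤ ∧ ∀ (n : ℕ) (A : Set ℝ),
      MeasurableSet A → volume A ≤ ENNReal.ofReal (2 / (τ ^ n) ^ 2) → m A ≤ C * κ ^ n := by
  have hτ0 : 0 < τ := by linarith
  refine ⟨ENNReal.ofReal (max (1 / τ) (τ ^ (1 - q))), ?_, 2 + ∫⁻ t, φ t ^ q, by simp [hfin.ne], fun n A hA hv => ?_⟩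
  · rw [ENNReal.ofReal_lt_one, max_lt_iff]
    refine ⟨by rw [div_lt_one hτ0]; exact hτ, Real.rpow_lt_one_of_one_lt_of_neg hτ (by linarith)⟩
  have hT : 0 < τ ^ n := by positivity
  refine (measure_le_of_density hq hφ hm hT hA).trans ?_
  rw [add_mul]
  gcongr ?_ + ?_
  · calc ENNReal.ofReal (τ ^ n) * volume A ≤ ENNReal.ofReal (τ ^ n) * ENNReal.ofReal (2 / (τ ^ n) ^ 2) := by gcongr
      _ = 2 * ENNReal.ofReal (1 / τ) ^ n := by
        rw [← ENNReal.ofReal_mul hT.le, ← ENNReal.ofReal_pow (by positivity)]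
        rw [show (2:ℝ≥0∞) = ENNReal.ofReal 2 by simp, ← ENNReal.ofReal_mul (by norm_num)]
        congr 1
        rw [one_div, inv_pow]
        field_simp
      _ ≤ _ := by gcongr; exact le_max_left _ _
  · rw [mul_comm]
    gcongr
    rw [← ENNReal.ofReal_pow (by positivity)]
    apply ENNReal.ofReal_le_ofReal
    calc (τ ^ n) ^ (1 - q) = (τ ^ (1 - q)) ^ n := by
          rw [← Real.rpow_natCast, ← Real.rpow_natCast, ← Real.rpow_mul hτ0.le, ← Real.rpow_mul hτ0.le, mul_comm]
      _ ≤ _ := by gcongr; exact le_max_right _ _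

/-- truncated density bound -/
lemma trunc_bound {m : Measure ℝ} {φ : ℝ → ℝ≥0∞} (hφ : Measurable φ)
    (hm : m = volume.withDensity φ) (M : ℝ≥0∞) (A : Set ℝ) :
    m (A ∩ {t | φ t ≤ M}) ≤ M * volume A := by
  rw [← measure_toMeasurable (μ := volume) A]
  have hB : MeasurableSet (toMeasurable volume A ∩ {t | φ t ≤ M}) :=
    (measurableSet_toMeasurable _ _).inter (measurableSet_le hφ measurable_const)
  calc m (A ∩ {t | φ t ≤ M}) ≤ m (toMeasurable volume A ∩ {t | φ t ≤ M}) :=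
        measure_mono (inter_subset_inter_left _ (subset_toMeasurable _ _))
    _ = ∫⁻ t in toMeasurable volume A ∩ {t | φ t ≤ M}, φ t := by rw [hm, withDensity_apply _ hB]
    _ ≤ ∫⁻ t in toMeasurable volume A ∩ {t | φ t ≤ M}, M :=
        setLIntegral_mono measurable_const fun t ht => ht.2
    _ = M * volume (toMeasurable volume A ∩ {t | φ t ≤ M}) := by simp
    _ ≤ _ := by gcongr; exact inter_subset_left

end dens

section upper
variable {N : ℕ} {b c : ℝ} {u v d : Fin N → ℝ} {Pi : (ℕ → Fin N) → ℝ × ℝ}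
    {μ : Measure (ℕ → Fin N)}

/-- the dimension value -/
def sdim (N : ℕ) (b c : ℝ) : ℝ := 1 + Real.log ((N : ℝ) * c) / (-Real.log b)

lemma Hyp.b_rpow (H : Hyp b c u v d Pi μ) : b ^ (sdim N b c) * (N * c) = b := by
  have hb0 := H.hb0
  have hNc : 0 < (N : ℝ) * c := by linarith [H.hNc]
  have hl : Real.log b < 0 := Real.log_neg hb0 H.hb1
  unfold sdim
  rw [Real.rpow_add hb0, Real.rpow_one, mul_assoc]
  have : b ^ (Real.log ((N : ℝ) * c) / (-Real.log b)) = (N * c)⁻¹ := by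
    rw [Real.rpow_def_of_pos hb0]
    have : Real.log b * (Real.log ((N : ℝ) * c) / (-Real.log b)) = - Real.log (N * c) := by
      have hl' := hl.ne
      field_simp
    rw [this, Real.exp_neg, Real.exp_log hNc]
  rw [this, inv_mul_cancel₀ hNc.ne', mul_one]

lemma Hyp.sdim_pos (H : Hyp b c u v d Pi μ) : 0 < sdim N b c := by
  have hl : Real.log b < 0 := Real.log_neg H.hb0 H.hb1
  have : 0 < Real.log ((N : ℝ) * c) := Real.log_pos H.hNc
  unfold sdim
  have : 0 < Real.log ((N : ℝ) * c) / (-Real.log b) := div_pos this (by linarith)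
  linarith

lemma Hyp.upper (H : Hyp b c u v d Pi μ) : dimH (Set.range Pi) ≤ ENNReal.ofReal (sdim N b c) := by
  obtain ⟨K, hK, hA⟩ := Sword_affine H.hb0 H.hbc u v d
  set s := sdim N b c with hs
  have hs0 := H.sdim_pos
  rw [← hs] at hs0
  have hb0 := H.hb0
  have hc0 := H.hc0
  have hb1 := H.hb1
  let Q : ℕ → ℕ := fun n => ⌈(c / b) ^ n⌉₊
  have hcb : 1 ≤ c / b := by rw [le_div_iff₀ hb0]; linarith [H.hbc]
  have hcbn : ∀ n : ℕ, 1 ≤ (c / b) ^ n := fun n => one_le_pow₀ hcb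
  have hQ : ∀ n, (c / b) ^ n ≤ Q n := fun n => Nat.le_ceil _
  have hQ2 : ∀ n, (Q n : ℝ) + 1 ≤ 3 * (c / b) ^ n := fun n => by
    have := Nat.ceil_lt_add_one (a := (c / b) ^ n) (by positivity)
    have h2 := hcbn n
    simp only [Q]; linarith
  let t : (n : ℕ) → ((Fin n → Fin N) × Fin (Q n + 1)) → Set (ℝ × ℝ) := fun n wq =>
    Sword c b u v d (List.ofFn wq.1) '' {p | p ∈ unitSq ∧ ⌊p.1 * Q n⌋₊ = wq.2.1}
  let r : ℕ → ℝ≥0∞ := fun n => ENNReal.ofReal ((K + 1) * b ^ n)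
  have hr : Tendsto r atTop (𝓝 0) := by
    have ht : Tendsto (fun n => (K + 1) * b ^ n) atTop (𝓝 ((K + 1) * 0)) :=
      (tendsto_pow_atTop_nhds_zero_of_lt_one hb0.le hb1).const_mul _
    rw [mul_zero] at ht
    simpa [r] using ENNReal.tendsto_ofReal ht
  have hdiam : ∀ n wq, Metric.ediam (t n wq) ≤ r n := by
    rintro n ⟨w, q⟩
    refine Metric.ediam_le ?_
    rintro _ ⟨p, ⟨hp, hpq⟩, rfl⟩ _ ⟨p', ⟨hp', hpq'⟩, rfl⟩
    rw [edist_dist]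
    apply ENNReal.ofReal_le_ofReal
    obtain ⟨U, D, V, hD, hS⟩ := hA (List.ofFn w)
    rw [List.length_ofFn] at hD hS
    rw [hS, hS, Prod.dist_eq, max_le_iff, Real.dist_eq, Real.dist_eq]
    rw [mem_unitSq] at hp hp'
    have hQ0 : (0:ℝ) < Q n := lt_of_lt_of_le (by positivity) (hQ n)
    have hc := pow_pos hc0 n
    have hb := pow_pos hb0 n
    have hx : |p.1 - p'.1| * Q n ≤ 1 := by
      have e1 := Nat.floor_le (a := p.1 * Q n) (mul_nonneg hp.1.1 hQ0.le)
      have e2 := Nat.lt_floor_add_one (p.1 * Q n)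
      have e3 := Nat.floor_le (a := p'.1 * Q n) (mul_nonneg hp'.1.1 hQ0.le)
      have e4 := Nat.lt_floor_add_one (p'.1 * Q n)
      simp only at hpq hpq'
      rw [hpq] at e1 e2; rw [hpq'] at e3 e4
      rw [show |p.1 - p'.1| * (Q n:ℝ) = |(p.1 - p'.1) * (Q n)| by rw [abs_mul, abs_of_pos hQ0], abs_le]
      constructor <;> nlinarith
    have hx2 : c ^ n * |p.1 - p'.1| ≤ b ^ n := by
      have h1 : c ^ n ≤ b ^ n * Q n := by
        have := hQ n
        rw [div_pow, div_le_iff₀ hb] at this; linarith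
      calc c ^ n * |p.1 - p'.1| ≤ b ^ n * Q n * |p.1 - p'.1| := by gcongr
        _ = b ^ n * (|p.1 - p'.1| * Q n) := by ring
        _ ≤ b ^ n * 1 := by gcongr
        _ = b ^ n := mul_one _
    simp only
    constructor
    · have : c ^ n * p.1 + U - (c ^ n * p'.1 + U) = c ^ n * (p.1 - p'.1) := by ring
      rw [this, abs_mul, abs_of_pos hc]
      nlinarith [mul_pos hK hb]
    · have : D * p.1 + b ^ n * p.2 + V - (D * p'.1 + b ^ n * p'.2 + V) =
        D * (p.1 - p'.1) + b ^ n * (p.2 - p'.2) := by ring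
      rw [this]
      have hy : |p.2 - p'.2| ≤ 1 := by rw [abs_le]; constructor <;> linarith
      calc |D * (p.1 - p'.1) + b ^ n * (p.2 - p'.2)| ≤ |D| * |p.1 - p'.1| + b ^ n * |p.2 - p'.2| := by
            refine (abs_add_le _ _).trans ?_
            rw [abs_mul, abs_mul, abs_of_pos hb]
        _ ≤ (K * c ^ n) * |p.1 - p'.1| + b ^ n * 1 := by gcongr
        _ = K * (c ^ n * |p.1 - p'.1|) + b ^ n := by ring
        _ ≤ K * b ^ n + b ^ n := by gcongr
        _ = _ := by ring
  have hcov : ∀ n, Set.range Pi ⊆ ⋃ wq, t n wq := by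
    rintro n _ ⟨i, rfl⟩
    rw [mem_iUnion]
    have hm := H.Pi_mem (sft n i)
    have hle : ⌊(Pi (sft n i)).1 * Q n⌋₊ < Q n + 1 := by
      rw [Nat.lt_succ_iff]
      apply Nat.floor_le_of_le
      have := (mem_unitSq.1 hm).1.2
      have h2 : (0:ℝ) ≤ Q n := by positivity
      nlinarith
    exact ⟨(fun k => i k, ⟨_, hle⟩), Pi (sft n i), ⟨hm, rfl⟩, (H.Pi_eq n i).symm⟩
  have key := Measure.hausdorffMeasure_le_liminf_sum s (Set.range Pi) r hr t
    (Eventually.of_forall hdiam) (Eventually.of_forall hcov)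
  have hb2 : ∀ n, ∑ wq, Metric.ediam (t n wq) ^ s ≤ ENNReal.ofReal (3 * (K + 1) ^ s) := by
    intro n
    calc ∑ wq, Metric.ediam (t n wq) ^ s ≤ ∑ _wq : (Fin n → Fin N) × Fin (Q n + 1), r n ^ s := by
          gcongr with wq; exact hdiam n wq
      _ = ENNReal.ofReal ((N : ℝ) ^ n * (Q n + 1) * ((K + 1) * b ^ n) ^ s) := by
          have hKb : 0 < (K + 1) * b ^ n := by positivity
          rw [Finset.sum_const, nsmul_eq_mul, Finset.card_univ, Fintype.card_prod, Fintype.card_fun,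
            Fintype.card_fin, Fintype.card_fin, Fintype.card_fin, ENNReal.ofReal_mul (by positivity),
            ← ENNReal.ofReal_rpow_of_pos hKb]
          congr 1
          rw [← ENNReal.ofReal_natCast]
          push_cast; rfl
      _ ≤ _ := by
          apply ENNReal.ofReal_le_ofReal
          have h1 : ((K + 1) * b ^ n) ^ s = (K + 1) ^ s * (b ^ s) ^ n := by
            rw [Real.mul_rpow (by positivity) (by positivity), ← Real.rpow_natCast, ← Real.rpow_natCast,
              ← Real.rpow_mul hb0.le, ← Real.rpow_mul hb0.le, mul_comm s]
          have hbs := H.b_rpow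
          rw [← hs] at hbs
          have h2 : (N : ℝ) * (c / b) * b ^ s = 1 := by
            field_simp; linarith
          calc (N : ℝ) ^ n * (Q n + 1) * ((K + 1) * b ^ n) ^ s
              ≤ (N : ℝ) ^ n * (3 * (c / b) ^ n) * ((K + 1) * b ^ n) ^ s := by
                gcongr; exact hQ2 n
            _ = 3 * (K + 1) ^ s * ((N : ℝ) * (c / b) * b ^ s) ^ n := by
                rw [h1, mul_pow, mul_pow]; ring
            _ = _ := by rw [h2, one_pow, mul_one]
  have hfin : Measure.hausdorffMeasure s (Set.range Pi) ≠ ⊤ := by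
    have h1 : liminf (fun n => ∑ wq, Metric.ediam (t n wq) ^ s) atTop ≤ ENNReal.ofReal (3 * (K + 1) ^ s) := by
      refine (liminf_le_liminf (Eventually.of_forall hb2)).trans ?_
      rw [liminf_const]
    exact ne_top_of_le_ne_top ENNReal.ofReal_ne_top (key.trans h1)
  have := dimH_le_of_hausdorffMeasure_ne_top (d := s.toNNReal) (s := Set.range Pi) (by
    rw [Real.coe_toNNReal s hs0.le]; exact hfin)
  exact this

end upper

section flat
variable {N : ℕ} {b c : ℝ} {u v d : Fin N → ℝ} {Pi : (ℕ → Fin N) → ℝ × ℝ}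
    {μ : Measure (ℕ → Fin N)}

lemma flat_Sword {v0 : ℝ} (hf : ∀ a, d a = 0 ∧ v a = v0) (n : ℕ) : ∃ V : ℝ, ∀ w : List (Fin N),
    w.length = n → ∃ U : ℝ, ∀ p, Sword c b u v d w p = (c ^ n * p.1 + U, b ^ n * p.2 + V) := by
  induction n with
  | zero =>
    refine ⟨0, fun w hw => ⟨0, fun p => ?_⟩⟩
    rw [List.length_eq_zero_iff] at hw
    subst hw
    simp [Sword]
  | succ n ih =>
    obtain ⟨V, hV⟩ := ih
    refine ⟨b * V + v0, fun w hw => ?_⟩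
    match w, hw with
    | a :: w, hw =>
      obtain ⟨U, hU⟩ := hV w (by simpa using hw)
      refine ⟨c * U + u a, fun p => ?_⟩
      simp only [Sword, Function.comp, hU, Smap, (hf a).1, (hf a).2]
      ext <;> simp <;> ring

lemma Hyp.measurable_X (H : Hyp b c u v d Pi μ) : Measurable (fun i => (Pi i).1) :=
  H.measurable_Pi.fst

open scoped Pointwise in
lemma Hyp.not_flat (H : Hyp b c u v d Pi μ) (hac : μ.map (fun i => (Pi i).1) ≪ volume)
    {c₃ : ℝ}
    (h3 : ∀ (n : ℕ) (i j : ℕ → Fin N), i 0 ≠ j 0 →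
    Metric.diam (Prod.fst '' (Sword c b u v d (prefixWord i n) '' unitSq ∩
      Sword c b u v d (prefixWord j n) '' unitSq)) < c₃ * b ^ n) {v0 : ℝ} :
    ¬ ∀ a, d a = 0 ∧ v a = v0 := by
  intro hf
  have := H.prob
  have hb0 := H.hb0
  have hc0 := H.hc0
  set K : Set ℝ := Set.range (fun i => (Pi i).1) with hK
  have hKc : IsCompact K := _root_.isCompact_range H.continuous_Pi.fst
  have hKv : volume K ≠ 0 := by
    intro h
    have h1 := hac h
    rw [Measure.map_apply H.measurable_X hKc.measurableSet] at h1
    have : (fun i => (Pi i).1) ⁻¹' K = univ := by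
      ext i; simp [hK]
    rw [this, measure_univ] at h1
    exact one_ne_zero h1
  have hKt : volume K ≠ ⊤ := hKc.measure_lt_top.ne
  let F : Fin N → Set ℝ := fun a => (fun x => c * x + u a) '' K
  have hFc : ∀ a, IsCompact (F a) := fun a => hKc.image (by fun_prop)
  have hFv : ∀ a, volume (F a) = ENNReal.ofReal c * volume K := by
    intro a
    have : F a = (fun x => x + u a) '' (c • K) := by
      rw [← Set.image_smul, Set.image_image]; rfl
    rw [this, image_add_right, measure_preimage_add_right, Measure.addHaar_smul]
    simp [abs_of_pos hc0]
  have hX1 : ∀ i, (Pi i).1 = c * (Pi (sft 1 i)).1 + u (i 0) := by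
    intro i
    rw [H.Pi_eq 1 i]
    simp [prefixWord, Sword, Smap]
  have hKF : K ⊆ ⋃ a, F a := by
    rintro _ ⟨i, rfl⟩
    rw [mem_iUnion]
    exact ⟨i 0, (Pi (sft 1 i)).1, ⟨_, rfl⟩, (hX1 i).symm⟩
  have hFmem : ∀ a, ∀ x ∈ F a, ∃ i : ℕ → Fin N, i 0 = a ∧ (Pi i).1 = x := by
    rintro a _ ⟨_, ⟨i, rfl⟩, rfl⟩
    let w : Fin 1 → Fin N := fun _ => a
    refine ⟨cat w i, cat_mem w i 0, ?_⟩
    have h0 : cat w i 0 = a := cat_mem w i 0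
    rw [hX1, sft_cat, h0]
  have hFK : (⋃ a, F a) ⊆ K := by
    intro x hx
    obtain ⟨a, ha⟩ := mem_iUnion.1 hx
    obtain ⟨i, -, rfl⟩ := hFmem a x ha
    exact ⟨i, rfl⟩
  by_cases hdis : ∀ a a', a ≠ a' → volume (F a ∩ F a') = 0
  · have h1 : volume (⋃ a, F a) = ∑' a, volume (F a) :=
      measure_iUnion₀ (fun a a' h => hdis a a' h) fun a => (hFc a).measurableSet.nullMeasurableSet
    rw [tsum_fintype, hFK.antisymm hKF] at h1
    simp only [hFv, Finset.sum_const, Finset.card_univ, Fintype.card_fin, nsmul_eq_mul] at h1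
    rw [← mul_assoc] at h1
    have h2 : (N : ℝ≥0∞) * ENNReal.ofReal c = 1 := by
      have : 1 * volume K = (N * ENNReal.ofReal c) * volume K := by rw [one_mul]; exact h1
      exact ((ENNReal.mul_left_inj hKv hKt).1 this).symm
    have h3 : ENNReal.ofReal (N * c) = 1 := by
      rw [ENNReal.ofReal_mul (by positivity), ENNReal.ofReal_natCast]; exact h2
    rw [ENNReal.ofReal_eq_one] at h3
    linarith [H.hNc]
  · push Not at hdis
    obtain ⟨a, a', hne, hvol⟩ := hdis
    apply hvol
    have hbound : ∀ n : ℕ, volume (F a ∩ F a') ≤ ENNReal.ofReal (c₃ * (N * b) ^ n) := by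
      intro n
      obtain ⟨V, hV⟩ := flat_Sword (c := c) (b := b) (u := u) hf n
      choose U hU using fun w : Fin n → Fin N => hV (List.ofFn w) (by simp)
      have hsub : F a ∩ F a' ⊆ ⋃ w : Fin n → Fin N, Icc (U w) (U w + c₃ * b ^ n) := by
        rintro x ⟨hx, hx'⟩
        obtain ⟨i, hi, hxi⟩ := hFmem a x hx
        obtain ⟨j, hj, hxj⟩ := hFmem a' x hx'
        let w : Fin n → Fin N := fun k => i k
        let w' : Fin n → Fin N := fun k => j k
        have hcn := pow_pos hc0 n
        have mi := mem_unitSq.1 (H.Pi_mem (sft n i))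
        have mj := mem_unitSq.1 (H.Pi_mem (sft n j))
        have ei : x = c ^ n * (Pi (sft n i)).1 + U w := by
          rw [← hxi, H.Pi_eq n i]
          have := hU w (Pi (sft n i))
          exact congrArg Prod.fst this
        have ej : x = c ^ n * (Pi (sft n j)).1 + U w' := by
          rw [← hxj, H.Pi_eq n j]
          have := hU w' (Pi (sft n j))
          exact congrArg Prod.fst this
        have hmem : ∀ (k : ℕ → Fin N) (x' : ℝ), U (fun m => k m) ≤ x' → x' ≤ U (fun m => k m) + c ^ n →
            ((x', V) : ℝ × ℝ) ∈ strip c b u v d (0 + n) k := by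
          intro k x' h1 h2
          refine ⟨((x' - U (fun m => k m)) / c ^ n, 0), ?_, ?_⟩
          · rw [mem_unitSq]
            refine ⟨⟨by apply div_nonneg <;> linarith, ?_⟩, le_rfl, zero_le_one⟩
            simp only
            rw [div_le_one hcn]; linarith
          · have := hU (fun m => k m) ((x' - U (fun m => k m)) / c ^ n, 0)
            rw [zero_add]
            unfold prefixWord
            rw [this]
            ext <;> simp
            field_simp
            ring
        have hii : c ^ n * (Pi (sft n i)).1 ≤ c ^ n := by nlinarith
        have hjj : c ^ n * (Pi (sft n j)).1 ≤ c ^ n := by nlinarith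
        have hii0 : 0 ≤ c ^ n * (Pi (sft n i)).1 := mul_nonneg hcn.le mi.1.1
        have hjj0 : 0 ≤ c ^ n * (Pi (sft n j)).1 := mul_nonneg hcn.le mj.1.1
        have hx1 := hmem i x (by simp only [w] at ei; linarith) (by simp only [w] at ei; linarith)
        have hx2 := hmem j x (by simp only [w'] at ej; linarith) (by simp only [w'] at ej; linarith)
        have hij0 : j ∈ cyl 0 i := fun m hm => absurd hm (by omega)
        have hne0 : i 0 ≠ j 0 := by rw [hi, hj]; exact hne
        rw [mem_iUnion]
        rcases le_total (U w) (U w') with hle | hle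
        · refine ⟨w', by linarith, ?_⟩
          have := H.trans_prefix h3 0 n i j hij0 hne0 _ _ hx1 hx2
            (hmem i (U w') hle (by simp only [w] at ei; linarith)) (hmem j (U w') le_rfl (by linarith))
          simp only [pow_zero, mul_one] at this
          have := (abs_le.1 this).2
          linarith
        · refine ⟨w, by linarith, ?_⟩
          have := H.trans_prefix h3 0 n i j hij0 hne0 _ _ hx1 hx2
            (hmem i (U w) le_rfl (by linarith)) (hmem j (U w) hle (by simp only [w'] at ej; linarith))
          simp only [pow_zero, mul_one] at this
          have := (abs_le.1 this).2
          linarith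
      refine (measure_mono hsub).trans ((measure_iUnion_le _).trans ?_)
      rw [tsum_fintype]
      simp only [Real.volume_Icc, add_sub_cancel_left, Finset.sum_const, Finset.card_univ,
        Fintype.card_fun, Fintype.card_fin, nsmul_eq_mul]
      rw [mul_pow, ← ENNReal.ofReal_natCast, ← ENNReal.ofReal_mul (by positivity)]
      apply ENNReal.ofReal_le_ofReal
      push_cast
      apply le_of_eq; ring
    have ht : Tendsto (fun n => ENNReal.ofReal (c₃ * (N * b) ^ n)) atTop (𝓝 0) := by
      have : Tendsto (fun n => c₃ * (N * b) ^ n) atTop (𝓝 (c₃ * 0)) :=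
        (tendsto_pow_atTop_nhds_zero_of_lt_one (by positivity) H.hNb).const_mul _
      rw [mul_zero] at this
      simpa using ENNReal.tendsto_ofReal this
    exact le_antisymm (ge_of_tendsto' ht hbound) zero_le

end flat

section depth
variable {N : ℕ} {b c : ℝ} {u v d : Fin N → ℝ} {Pi : (ℕ → Fin N) → ℝ × ℝ}
    {μ : Measure (ℕ → Fin N)}

lemma deep_mono {h h' : ℝ} (hh : h' ≤ h) {p : ℝ × ℝ} (hd : deep h p) : deep h' p := by
  obtain ⟨⟨h1, h2⟩, h3, h4⟩ := hd
  exact ⟨⟨by linarith, by linarith⟩, by linarith, by linarith⟩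

lemma Hyp.not_const (H : Hyp b c u v d Pi μ) (hac : μ.map (fun i => (Pi i).1) ≪ volume) (x0 : ℝ) :
    ¬ ∀ a, c * x0 + u a = x0 := by
  intro hx
  have := H.prob
  have hc0 := H.hc0
  have hX1 : ∀ i, (Pi i).1 = c * (Pi (sft 1 i)).1 + u (i 0) := by
    intro i
    rw [H.Pi_eq 1 i]
    simp [prefixWord, Sword, Smap]
  have hb : ∀ n : ℕ, ∀ i, |(Pi i).1 - x0| ≤ c ^ n * (1 + |x0|) := by
    intro n
    induction n with
    | zero =>
      intro i
      have m := mem_unitSq.1 (H.Pi_mem i)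
      have : |(Pi i).1| ≤ 1 := abs_le.2 ⟨by linarith, m.1.2⟩
      have h2 := abs_sub (Pi i).1 x0
      simp only [pow_zero, one_mul]
      linarith
    | succ n ih =>
      intro i
      have e : (Pi i).1 - x0 = c * ((Pi (sft 1 i)).1 - x0) := by
        rw [hX1 i]; linarith [hx (i 0)]
      rw [e, abs_mul, abs_of_pos hc0, pow_succ']
      have := ih (sft 1 i)
      nlinarith
  have hX : ∀ i, (Pi i).1 = x0 := by
    intro i
    have ht : Tendsto (fun n => c ^ n * (1 + |x0|)) atTop (𝓝 (0 * (1 + |x0|))) :=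
      (tendsto_pow_atTop_nhds_zero_of_lt_one hc0.le H.hc1).mul_const _
    rw [zero_mul] at ht
    have := ge_of_tendsto' ht fun n => hb n i
    have := abs_nonpos_iff.1 this
    linarith
  have h1 := hac (show volume ({x0} : Set ℝ) = 0 by simp)
  rw [Measure.map_apply H.measurable_X (measurableSet_singleton _)] at h1
  have : (fun i => (Pi i).1) ⁻¹' {x0} = univ := by ext i; simp [hX]
  rw [this, measure_univ] at h1
  exact one_ne_zero h1

lemma Hyp.corners (H : Hyp b c u v d Pi μ) (a : Fin N) :
    0 ≤ u a ∧ c + u a ≤ 1 ∧ 0 ≤ v a ∧ b + v a ≤ 1 ∧ 0 ≤ d a + v a ∧ d a + b + v a ≤ 1 := by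
  have m0 := mem_unitSq.1 (H.hmaps a ⟨(0, 0), by simp [mem_unitSq], rfl⟩)
  have m1 := mem_unitSq.1 (H.hmaps a ⟨(1, 0), by simp [mem_unitSq], rfl⟩)
  have m2 := mem_unitSq.1 (H.hmaps a ⟨(0, 1), by simp [mem_unitSq], rfl⟩)
  have m3 := mem_unitSq.1 (H.hmaps a ⟨(1, 1), by simp [mem_unitSq], rfl⟩)
  simp only [Smap, mul_zero, mul_one, zero_add, add_zero] at m0 m1 m2 m3
  exact ⟨m0.1.1, m1.1.2, m0.2.1, m2.2.2, m1.2.1, m3.2.2⟩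

lemma Hyp.deep_word (H : Hyp b c u v d Pi μ) (hac : μ.map (fun i => (Pi i).1) ≪ volume)
    {c₃ : ℝ}
    (h3 : ∀ (n : ℕ) (i j : ℕ → Fin N), i 0 ≠ j 0 →
    Metric.diam (Prod.fst '' (Sword c b u v d (prefixWord i n) '' unitSq ∩
      Sword c b u v d (prefixWord j n) '' unitSq)) < c₃ * b ^ n) :
    ∃ (w : Fin 6 → Fin N) (h : ℝ), 0 < h ∧ ∀ p ∈ unitSq, deep h (Sword c b u v d (List.ofFn w) p) := by
  have hb0 := H.hb0
  have hc0 := H.hc0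
  obtain ⟨i, hi⟩ : ∃ i, 0 < u i := by
    by_contra hcon
    push Not at hcon
    exact H.not_const hac 0 fun a => by have := (H.corners a).1; linarith [hcon a]
  obtain ⟨j, hj⟩ : ∃ i, c + u i < 1 := by
    by_contra hcon
    push Not at hcon
    exact H.not_const hac 1 fun a => by have := (H.corners a).2.1; linarith [hcon a]
  obtain ⟨a, ha⟩ : ∃ a, ¬ (d a = 0 ∧ v a = 1 - b) := by
    by_contra hcon
    push Not at hcon
    exact H.not_flat hac h3 hcon
  obtain ⟨a', ha'⟩ : ∃ a, ¬ (d a = 0 ∧ v a = 0) := by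
    by_contra hcon
    push Not at hcon
    exact H.not_flat hac h3 hcon
  let w : Fin 6 → Fin N := ![a, i, j, a', i, j]
  -- facts
  have hmem : ∀ k, ∀ p ∈ unitSq, Smap c b u v d k p ∈ unitSq := fun k p hp => H.hmaps k ⟨p, hp, rfl⟩
  have hx : ∀ p ∈ unitSq, 0 < (Smap c b u v d i (Smap c b u v d j p)).1 ∧
      (Smap c b u v d i (Smap c b u v d j p)).1 < 1 := by
    intro p hp
    have hp' := mem_unitSq.1 hp
    obtain ⟨i1, i2, -⟩ := H.corners i
    obtain ⟨j1, j2, -⟩ := H.corners j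
    simp only [Smap]
    have e1 : 0 ≤ c * p.1 := mul_nonneg hc0.le hp'.1.1
    have e2 : c * p.1 ≤ c := by nlinarith
    have e3 : 0 ≤ c * (c * p.1 + u j) := mul_nonneg hc0.le (by linarith)
    have e4 : c * (c * p.1 + u j) < c := by nlinarith
    constructor <;> linarith
  have hxk : ∀ k, ∀ p : ℝ × ℝ, 0 < p.1 → p.1 < 1 → 0 < (Smap c b u v d k p).1 ∧ (Smap c b u v d k p).1 < 1 := by
    intro k p h0 h1
    obtain ⟨i1, i2, -⟩ := H.corners k
    simp only [Smap]
    have e1 : 0 < c * p.1 := mul_pos hc0 h0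
    have e2 : c * p.1 < c := by nlinarith
    constructor <;> linarith
  have hy : ∀ k, ∀ p ∈ unitSq, 0 < p.2 → 0 < (Smap c b u v d k p).2 := by
    intro k p hp h0
    have hp' := mem_unitSq.1 hp
    obtain ⟨-, -, i1, i2, i3, i4⟩ := H.corners k
    simp only [Smap]
    have e1 : 0 < b * p.2 := mul_pos hb0 h0
    have e2 : 0 ≤ d k * p.1 + v k := by
      nlinarith [mul_nonneg hp'.1.1 i3, mul_nonneg (sub_nonneg.2 hp'.1.2) i1]
    linarith
  have hbot : ∀ p ∈ unitSq, 0 < p.1 → p.1 < 1 → 0 < (Smap c b u v d a' p).2 := by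
    intro p hp h0 h1
    have hp' := mem_unitSq.1 hp
    obtain ⟨-, -, i1, i2, i3, i4⟩ := H.corners a'
    simp only [Smap]
    have e1 : 0 ≤ b * p.2 := mul_nonneg hb0.le hp'.2.1
    have e2 : 0 < d a' * p.1 + v a' := by
      rcases i1.lt_or_eq with hv | hv
      · nlinarith [mul_nonneg hp'.1.1 i3, mul_pos (sub_pos.2 h1) hv]
      · have hd : 0 < d a' := by
          rw [← hv, add_zero] at i3
          exact lt_of_le_of_ne i3 fun h => ha' ⟨h.symm, hv.symm⟩
        nlinarith [mul_pos hd h0]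
    linarith
  have htop : ∀ p ∈ unitSq, 0 < p.1 → p.1 < 1 → (Smap c b u v d a p).2 < 1 := by
    intro p hp h0 h1
    have hp' := mem_unitSq.1 hp
    obtain ⟨-, -, i1, i2, i3, i4⟩ := H.corners a
    simp only [Smap]
    have e1 : b * p.2 ≤ b := by nlinarith
    have e2 : d a * p.1 + b + v a < 1 := by
      rcases i2.lt_or_eq with hv | hv
      · nlinarith [mul_nonneg hp'.1.1 (sub_nonneg.2 i4), mul_pos (sub_pos.2 h1) (sub_pos.2 hv)]
      · have hd : d a < 0 := by
          refine lt_of_le_of_ne (by linarith) fun h => ha ⟨h, by linarith⟩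
        nlinarith [mul_pos (neg_pos.2 hd) h0]
    linarith
  let g : ℝ × ℝ → ℝ := fun p => min (min p.1 (1 - p.1)) (min p.2 (1 - p.2))
  have hg : Continuous fun p => g (Sword c b u v d (List.ofFn w) p) := by
    have : Continuous g := by simp only [g]; fun_prop
    exact this.comp (continuous_Sword _ _ _ _ _ _)
  have hpos : ∀ p ∈ unitSq, 0 < g (Sword c b u v d (List.ofFn w) p) := by
    intro p hp
    have e : Sword c b u v d (List.ofFn w) p = Smap c b u v d a (Smap c b u v d i (Smap c b u v d j
        (Smap c b u v d a' (Smap c b u v d i (Smap c b u v d j p))))) := by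
      simp [w, Sword]
    rw [e]
    set p1 := Smap c b u v d i (Smap c b u v d j p) with hp1
    have m1 : p1 ∈ unitSq := hmem _ _ (hmem _ _ hp)
    have x1 := hx p hp
    rw [← hp1] at x1
    set q := Smap c b u v d a' p1 with hq
    have mq : q ∈ unitSq := hmem _ _ m1
    have yq : 0 < q.2 := hbot p1 m1 x1.1 x1.2
    have x2 := hx q mq
    have m2 := hmem i _ (hmem j _ mq)
    have y2 := hy i _ (hmem j _ mq) (hy j _ mq yq)
    set p2 := Smap c b u v d i (Smap c b u v d j q) with hp2
    have x3 := hxk a p2 x2.1 x2.2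
    have y3 := hy a p2 m2 y2
    have t3 := htop p2 m2 x2.1 x2.2
    simp only [g, lt_min_iff]
    exact ⟨⟨x3.1, by linarith [x3.2]⟩, y3, by linarith⟩
  obtain ⟨p0, hp0, hmin⟩ := isCompact_unitSq.exists_isMinOn ⟨0, zero_mem_unitSq⟩ hg.continuousOn
  refine ⟨w, g (Sword c b u v d (List.ofFn w) p0), hpos p0 hp0, fun p hp => ?_⟩
  have h1 : g (Sword c b u v d (List.ofFn w) p0) ≤ g (Sword c b u v d (List.ofFn w) p) := hmin hp
  refine deep_mono h1 ?_
  set z := Sword c b u v d (List.ofFn w) p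
  have g1 : g z ≤ z.1 := (min_le_left _ _).trans (min_le_left _ _)
  have g2 : g z ≤ 1 - z.1 := (min_le_left _ _).trans (min_le_right _ _)
  have g3 : g z ≤ z.2 := (min_le_right _ _).trans (min_le_left _ _)
  have g4 : g z ≤ 1 - z.2 := (min_le_right _ _).trans (min_le_right _ _)
  exact ⟨⟨g1, by linarith⟩, g3, by linarith⟩

lemma measurableSet_deep (h : ℝ) : MeasurableSet {p : ℝ × ℝ | deep h p} := by
  have h1 : MeasurableSet {p : ℝ × ℝ | h ≤ p.1} := measurableSet_le measurable_const measurable_fst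
  have h2 : MeasurableSet {p : ℝ × ℝ | p.1 ≤ 1 - h} := measurableSet_le measurable_fst measurable_const
  have h3 : MeasurableSet {p : ℝ × ℝ | h ≤ p.2} := measurableSet_le measurable_const measurable_snd
  have h4 : MeasurableSet {p : ℝ × ℝ | p.2 ≤ 1 - h} := measurableSet_le measurable_snd measurable_const
  exact (h1.inter h2).inter (h3.inter h4)

lemma Hyp.depth_prob (H : Hyp b c u v d Pi μ) {w : Fin 6 → Fin N} {h : ℝ} (h0 : 0 < h)
    (hd : ∀ p ∈ unitSq, deep h (Sword c b u v d (List.ofFn w) p)) (t : ℕ) :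
    μ {i | ¬ deep (b ^ (6 * t) * h) (Pi i)} ≤ (1 - (1 / (N : ℝ≥0∞)) ^ 6) ^ t := by
  have := H.prob
  have hmeas : ∀ t : ℕ, MeasurableSet {i | ¬ deep (b ^ (6 * t) * h) (Pi i)} := fun t =>
    (H.measurable_Pi (measurableSet_deep _)).compl
  induction t with
  | zero => simpa using prob_le_one
  | succ t ih =>
    set B := {i | ¬ deep (b ^ (6 * t) * h) (Pi i)} with hB
    have hsub : {i | ¬ deep (b ^ (6 * (t + 1)) * h) (Pi i)} ⊆ sft 6 ⁻¹' B \ (cylF w ∩ sft 6 ⁻¹' B) := by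
      intro i hi
      rw [mem_ofPred_eq] at hi
      have hnc : i ∉ cylF w := by
        intro hc
        apply hi
        have e : prefixWord i 6 = List.ofFn w := by
          unfold prefixWord; congr 1; funext k; exact hc k
        rw [H.Pi_eq 6 i, e]
        refine deep_mono ?_ (hd _ (H.Pi_mem _))
        have : b ^ (6 * (t + 1)) ≤ 1 := pow_le_one₀ H.hb0.le H.hb1.le
        nlinarith
      have hB1 : sft 6 i ∈ B := by
        rw [hB, mem_ofPred_eq]
        intro hdp
        apply hi
        rw [H.Pi_eq 6 i]
        have := H.deep_Sword (prefixWord i 6) (H.Pi_mem _) (mul_nonneg (pow_nonneg H.hb0.le _) h0.le) hdp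
        rw [prefixWord_length] at this
        convert this using 1
        ring
      exact ⟨hB1, fun h => hnc h.1⟩
    refine (measure_mono hsub).trans ?_
    have hBm : MeasurableSet B := hmeas t
    rw [measure_sdiff inter_subset_right ((measurableSet_cylF w).inter (measurable_sft 6 hBm)).nullMeasurableSet
      (measure_ne_top _ _), H.inv 6 hBm, H.indep w hBm, pow_succ' _ t]
    calc μ B - (1 / (N : ℝ≥0∞)) ^ 6 * μ B = (1 - (1 / (N : ℝ≥0∞)) ^ 6) * μ B := by
          rw [ENNReal.sub_mul (fun _ _ => measure_ne_top _ _), one_mul]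
      _ ≤ _ := by gcongr

lemma tsum_pow_div_ne_top {θ : ℝ≥0∞} (hθ : θ < 1) (E : ℕ) (hE : E ≠ 0) : ∑' n : ℕ, θ ^ (n / E) ≠ ⊤ := by
  have : NeZero E := ⟨hE⟩
  have e : ∑' n : ℕ, θ ^ (n / E) = ∑' p : ℕ × Fin E, θ ^ p.1 := by
    rw [← (Nat.divModEquiv E).tsum_eq]
    rfl
  rw [e, ENNReal.tsum_prod']
  simp only [tsum_fintype, Finset.sum_const, Finset.card_univ, Fintype.card_fin, nsmul_eq_mul]
  rw [ENNReal.tsum_mul_left, ENNReal.tsum_geometric]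
  refine ENNReal.mul_ne_top (by simp) ?_
  rw [ENNReal.inv_ne_top]
  exact (tsub_pos_of_lt hθ).ne'

lemma Hyp.depth_ae (H : Hyp b c u v d Pi μ) (hac : μ.map (fun i => (Pi i).1) ≪ volume)
    {c₃ : ℝ}
    (h3 : ∀ (n : ℕ) (i j : ℕ → Fin N), i 0 ≠ j 0 →
    Metric.diam (Prod.fst '' (Sword c b u v d (prefixWord i n) '' unitSq ∩
      Sword c b u v d (prefixWord j n) '' unitSq)) < c₃ * b ^ n) {η : ℝ} (hη0 : 0 < η) (hη1 : η < 1) :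
    ∃ h > 0, ∀ᵐ i ∂μ, ∀ᶠ n in atTop, deep (h * η ^ n) (Pi (sft n i)) := by
  obtain ⟨w, h, h0, hd⟩ := H.deep_word hac h3
  refine ⟨h, h0, ?_⟩
  obtain ⟨E, hE⟩ := exists_pow_lt_of_lt_one (pow_pos H.hb0 6) hη1
  have hE' : η ^ (E + 1) ≤ b ^ 6 := by
    rw [pow_succ]
    have := pow_pos hη0 E
    nlinarith
  have hN0 : (N : ℝ≥0∞) ≠ 0 := by have := H.hN; simp; omega
  have hθ : (1 - (1 / (N : ℝ≥0∞)) ^ 6) < 1 := by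
    apply ENNReal.sub_lt_self (by simp) (by simp)
    simp
  have hs : ∑' n : ℕ, μ (sft n ⁻¹' {i | ¬ deep (b ^ (6 * (n / (E + 1))) * h) (Pi i)}) ≠ ⊤ := by
    refine ne_top_of_le_ne_top (tsum_pow_div_ne_top hθ (E + 1) (by omega)) ?_
    refine ENNReal.tsum_le_tsum fun n => ?_
    have hm : MeasurableSet {i | ¬ deep (b ^ (6 * (n / (E + 1))) * h) (Pi i)} :=
      (H.measurable_Pi (measurableSet_deep _)).compl
    rw [H.inv n hm]
    exact H.depth_prob h0 hd _
  filter_upwards [ae_eventually_notMem hs] with i hi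
  filter_upwards [hi] with n hn
  have hn' : deep (b ^ (6 * (n / (E + 1))) * h) (Pi (sft n i)) := by
    by_contra hcon
    exact hn hcon
  refine deep_mono ?_ hn'
  rw [mul_comm]
  gcongr
  calc η ^ n ≤ η ^ ((E + 1) * (n / (E + 1))) :=
        pow_le_pow_of_le_one hη0.le hη1.le (Nat.mul_div_le _ _)
    _ = (η ^ (E + 1)) ^ (n / (E + 1)) := pow_mul _ _ _
    _ ≤ (b ^ 6) ^ (n / (E + 1)) := by gcongr
    _ = _ := (pow_mul _ _ _).symm

end depth

section count
variable {N : ℕ} {b c : ℝ} {u v d : Fin N → ℝ} {Pi : (ℕ → Fin N) → ℝ × ℝ}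
    {μ : Measure (ℕ → Fin N)}

/-- good set at level `n` -/
def Gd (c : ℝ) (Pi : (ℕ → Fin N) → ℝ × ℝ) (m : Measure ℝ) (φ : ℝ → ℝ≥0∞) (n : ℕ) (M : ℝ) :
    Set (ℕ → Fin N) :=
  {i | φ (Pi (sft n i)).1 ≤ ENNReal.ofReal M ∧ ∀ k < n,
    m (Metric.closedBall (Pi (sft k i)).1 (2 * c ^ (n - k))) ≤ ENNReal.ofReal (M * (2 * c ^ (n - k)))}

lemma measurableSet_cyl (n : ℕ) (i : ℕ → Fin N) : MeasurableSet (cyl n i) := by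
  rw [cyl_eq]; exact measurableSet_cylF _

lemma Hyp.indep_cyl (H : Hyp b c u v d Pi μ) (n : ℕ) (i : ℕ → Fin N) {B : Set (ℕ → Fin N)}
    (hB : MeasurableSet B) : μ (cyl n i ∩ sft n ⁻¹' B) = (1 / (N : ℝ≥0∞)) ^ n * μ B := by
  rw [cyl_eq, H.indep _ hB]

lemma Hyp.pair_bound (H : Hyp b c u v d Pi μ) {c₃ : ℝ} (h30 : 0 < c₃)
    (h3 : ∀ (n : ℕ) (i j : ℕ → Fin N), i 0 ≠ j 0 →
    Metric.diam (Prod.fst '' (Sword c b u v d (prefixWord i n) '' unitSq ∩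
      Sword c b u v d (prefixWord j n) '' unitSq)) < c₃ * b ^ n)
    {φ : ℝ → ℝ≥0∞} (hφ : Measurable φ)
    (hm : μ.map (fun i => (Pi i).1) = volume.withDensity φ) {M : ℝ} (hM : 0 < M) (k p : ℕ)
    (i j : ℕ → Fin N) (hij : j ∈ cyl k i) (hne : i k ≠ j k) :
    μ (cyl (k + p) i ∩ Gd c Pi (μ.map (fun i => (Pi i).1)) φ (k + p) M ∩ Pi ⁻¹' strip c b u v d (k + p) j)
      ≤ (1 / (N : ℝ≥0∞)) ^ (k + p) * ENNReal.ofReal (M * (2 * (c₃ * (b / c) ^ p))) := by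
  have hb0 := H.hb0
  have hc0 := H.hc0
  rcases (cyl (k + p) i ∩ Gd c Pi (μ.map (fun i => (Pi i).1)) φ (k + p) M ∩
      Pi ⁻¹' strip c b u v d (k + p) j).eq_empty_or_nonempty with he | ⟨i', ⟨hi'1, hi'2⟩, hi'3⟩
  · rw [he, measure_empty]; exact zero_le
  set x0 := (Pi (sft (k + p) i')).1 with hx0
  set ρ := c₃ * (b / c) ^ p with hρ
  have hρ0 : 0 ≤ ρ := by positivity
  let B : Set (ℕ → Fin N) := (fun i => (Pi i).1) ⁻¹' (Metric.closedBall x0 ρ ∩ {t | φ t ≤ ENNReal.ofReal M})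
  have hBm' : MeasurableSet (Metric.closedBall x0 ρ ∩ {t | φ t ≤ ENNReal.ofReal M}) :=
    Metric.isClosed_closedBall.measurableSet.inter (measurableSet_le hφ measurable_const)
  have hBm : MeasurableSet B := H.measurable_X hBm'
  have hsub : cyl (k + p) i ∩ Gd c Pi (μ.map (fun i => (Pi i).1)) φ (k + p) M ∩
      Pi ⁻¹' strip c b u v d (k + p) j ⊆ cyl (k + p) i ∩ sft (k + p) ⁻¹' B := by
    rintro i'' ⟨⟨h1, h2⟩, h4⟩
    refine ⟨h1, ?_, h2.1⟩
    obtain ⟨U, hU⟩ := H.X_eq (k + p) i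
    have e1 := hU i' hi'1
    have e2 := hU i'' h1
    have s1 : Pi i' ∈ strip c b u v d (k + p) i := by
      rw [← strip_congr hi'1]; exact H.Pi_mem_strip _ _
    have s2 : Pi i'' ∈ strip c b u v d (k + p) i := by
      rw [← strip_congr h1]; exact H.Pi_mem_strip _ _
    have ht := H.trans_prefix h3 k p i j hij hne _ _ s2 h4 s1 hi'3
    rw [e1, e2] at ht
    rw [Metric.mem_closedBall, Real.dist_eq]
    have e3 : c ^ (k + p) * (Pi (sft (k + p) i'')).1 + U - (c ^ (k + p) * (Pi (sft (k + p) i')).1 + U)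
      = c ^ (k + p) * ((Pi (sft (k + p) i'')).1 - x0) := by rw [hx0]; ring
    have hck := pow_pos hc0 (k + p)
    rw [e3, abs_mul, abs_of_pos hck] at ht
    have e4 : c₃ * c ^ k * b ^ p = c ^ (k + p) * ρ := by
      rw [hρ, pow_add, div_pow]; field_simp
    rw [e4] at ht
    exact le_of_mul_le_mul_left ht hck
  refine (measure_mono hsub).trans ?_
  rw [H.indep_cyl _ _ hBm]
  gcongr
  have e : μ B = μ.map (fun i => (Pi i).1) (Metric.closedBall x0 ρ ∩ {t | φ t ≤ ENNReal.ofReal M}) := by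
    rw [Measure.map_apply H.measurable_X hBm']
  rw [e]
  refine (trunc_bound hφ hm _ _).trans ?_
  rw [Real.volume_closedBall, ← ENNReal.ofReal_mul hM.le]

lemma Hyp.card_bound (H : Hyp b c u v d Pi μ) {φ : ℝ → ℝ≥0∞} {M : ℝ} (n k : ℕ) (hk : k < n)
    (i : ℕ → Fin N) (hi : i ∈ Gd c Pi (μ.map (fun i => (Pi i).1)) φ n M)
    (T : Finset (Fin n → Fin N))
    (hT : ∀ w ∈ T, cylF w ⊆ cyl k i ∧ ∃ i' ∈ cyl n i, Pi i' ∈ Sword c b u v d (List.ofFn w) '' unitSq) :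
    (T.card : ℝ≥0∞) * (1 / (N : ℝ≥0∞)) ^ n ≤
      (1 / (N : ℝ≥0∞)) ^ k * ENNReal.ofReal (M * (2 * c ^ (n - k))) := by
  have hc0 := H.hc0
  set x0 := (Pi (sft k i)).1 with hx0
  let B : Set (ℕ → Fin N) := (fun i => (Pi i).1) ⁻¹' (Metric.closedBall x0 (2 * c ^ (n - k)))
  have hBm : MeasurableSet B := H.measurable_X Metric.isClosed_closedBall.measurableSet
  have h1 : (T.card : ℝ≥0∞) * (1 / (N : ℝ≥0∞)) ^ n = μ (⋃ w ∈ T, cylF w) := by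
    rw [measure_biUnion_finset]
    · simp only [H.measure_cylF, Finset.sum_const, nsmul_eq_mul]
    · intro w _ w' _ hne
      refine Set.disjoint_left.2 fun x hx hx' => hne ?_
      funext k; rw [← hx k, ← hx' k]
    · exact fun w _ => measurableSet_cylF w
  have hsub : (⋃ w ∈ T, cylF w) ⊆ cyl k i ∩ sft k ⁻¹' B := by
    intro j hj
    simp only [mem_iUnion] at hj
    obtain ⟨w, hw, hj⟩ := hj
    obtain ⟨hw1, i', hi', hs⟩ := hT w hw
    refine ⟨hw1 hj, ?_⟩
    have hjs : Pi j ∈ strip c b u v d n j := H.Pi_mem_strip n j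
    have hs' : Pi i' ∈ strip c b u v d n j := by
      have : prefixWord j n = List.ofFn w := by
        unfold prefixWord; congr 1; funext k; exact hj k
      unfold strip; rw [this]; exact hs
    have d1 := strip_fst_le hc0 n j hjs hs'
    have d2 := strip_fst_le (z := Pi i') (z' := Pi i) hc0 n i
      (by rw [← strip_congr hi']; exact H.Pi_mem_strip _ _) (H.Pi_mem_strip n i)
    have d3 : |(Pi j).1 - (Pi i).1| ≤ 2 * c ^ n := by
      have := abs_sub_le (Pi j).1 (Pi i').1 (Pi i).1
      linarith
    obtain ⟨U, hU⟩ := H.X_eq k i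
    rw [hU j (hw1 hj), hU i (fun _ _ => rfl)] at d3
    have e3 : c ^ k * (Pi (sft k j)).1 + U - (c ^ k * (Pi (sft k i)).1 + U)
      = c ^ k * ((Pi (sft k j)).1 - x0) := by rw [hx0]; ring
    have hck := pow_pos hc0 k
    have e4 : 2 * c ^ n = c ^ k * (2 * c ^ (n - k)) := by
      rw [← mul_assoc, mul_comm (c ^ k), mul_assoc, ← pow_add]; congr 2; omega
    rw [e3, abs_mul, abs_of_pos hck, e4] at d3
    change _ ∈ Metric.closedBall x0 (2 * c ^ (n - k))
    rw [Metric.mem_closedBall, Real.dist_eq]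
    exact le_of_mul_le_mul_left d3 hck
  rw [h1]
  refine (measure_mono hsub).trans ?_
  rw [H.indep_cyl _ _ hBm]
  gcongr
  have := hi.2 k hk
  rwa [Measure.map_apply H.measurable_X Metric.isClosed_closedBall.measurableSet] at this

lemma Hyp.word_sum (H : Hyp b c u v d Pi μ) {c₃ : ℝ} (h30 : 0 < c₃)
    (h3 : ∀ (n : ℕ) (i j : ℕ → Fin N), i 0 ≠ j 0 →
    Metric.diam (Prod.fst '' (Sword c b u v d (prefixWord i n) '' unitSq ∩
      Sword c b u v d (prefixWord j n) '' unitSq)) < c₃ * b ^ n)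
    {φ : ℝ → ℝ≥0∞} (hφ : Measurable φ)
    (hm : μ.map (fun i => (Pi i).1) = volume.withDensity φ) {M : ℝ} (hM : 0 < M) (n : ℕ)
    (w : Fin n → Fin N) :
    ∑ w' : Fin n → Fin N, μ (cylF w ∩ Gd c Pi (μ.map (fun i => (Pi i).1)) φ n M ∩
      Pi ⁻¹' (Sword c b u v d (List.ofFn w') '' unitSq))
    ≤ (1 / (N : ℝ≥0∞)) ^ n * (1 + ∑ k : Fin n, ENNReal.ofReal (4 * c₃ * M ^ 2 * (N * b) ^ (n - k))) := by
  classical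
  have hb0 := H.hb0
  have hc0 := H.hc0
  set G := Gd c Pi (μ.map (fun i => (Pi i).1)) φ n M with hG
  let f : (Fin n → Fin N) → ℝ≥0∞ := fun w' => μ (cylF w ∩ G ∩ Pi ⁻¹' (Sword c b u v d (List.ofFn w') '' unitSq))
  change ∑ w', f w' ≤ _
  rcases (cylF w ∩ G).eq_empty_or_nonempty with he | ⟨i, hiw, hiG⟩
  · simp [f, he]
  let T : Fin n → Finset (Fin n → Fin N) := fun k => Finset.univ.filter fun w' =>
    (∀ m < k, w' m = w m) ∧ w' k ≠ w k ∧
      (cylF w ∩ G ∩ Pi ⁻¹' (Sword c b u v d (List.ofFn w') '' unitSq)).Nonempty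
  have hf1 : f w ≤ (1 / (N : ℝ≥0∞)) ^ n := by
    rw [← H.measure_cylF w]
    exact measure_mono (inter_subset_left.trans inter_subset_left)
  have hstep : ∀ w', f w' ≤ (if w' = w then f w' else 0) + ∑ k, if w' ∈ T k then f w' else 0 := by
    intro w'
    by_cases hw : w' = w
    · rw [if_pos hw]; exact le_self_add
    rw [if_neg hw, zero_add]
    rcases (cylF w ∩ G ∩ Pi ⁻¹' (Sword c b u v d (List.ofFn w') '' unitSq)).eq_empty_or_nonempty with he | hne
    · simp [f, he]
    have : {k | w' k ≠ w k}.Nonempty := by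
      by_contra hcon
      apply hw
      funext k
      by_contra hk
      exact hcon ⟨k, hk⟩
    obtain ⟨k, hk, hmin⟩ := wellFounded_lt.has_min _ this
    have hkT : w' ∈ T k := by
      simp only [T, Finset.mem_filter, Finset.mem_univ, true_and]
      refine ⟨fun m hm => ?_, hk, hne⟩
      by_contra h
      exact hmin m h hm
    calc f w' = if w' ∈ T k then f w' else 0 := by rw [if_pos hkT]
      _ ≤ _ := Finset.single_le_sum (f := fun k => if w' ∈ T k then f w' else 0)
        (fun _ _ => zero_le) (Finset.mem_univ k)
  have hTk : ∀ k : Fin n, ∑ w' ∈ T k, f w' ≤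
      (1 / (N : ℝ≥0∞)) ^ n * ENNReal.ofReal (4 * c₃ * M ^ 2 * (N * b) ^ (n - k)) := by
    intro k
    obtain ⟨p, hp⟩ : ∃ p, n = k + p := ⟨n - k, by omega⟩
    have hpb : ∀ w' ∈ T k, f w' ≤ (1 / (N : ℝ≥0∞)) ^ n * ENNReal.ofReal (M * (2 * (c₃ * (b / c) ^ p))) := by
      intro w' hw'
      simp only [T, Finset.mem_filter, Finset.mem_univ, true_and] at hw'
      obtain ⟨h1, h2, -⟩ := hw'
      have hj := cat_mem w' i
      set j := cat w' i
      have := H.pair_bound h30 h3 hφ hm hM k p i j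
        (fun m hm => by
          have hmn : m < n := hm.trans k.2
          have := h1 ⟨m, hmn⟩ hm
          have e1 := hj ⟨m, hmn⟩
          have e2 := hiw ⟨m, hmn⟩
          simp only at e1 e2
          rw [e1, e2, this])
        (by rw [hj k, hiw k]; exact h2.symm)
      rw [← hp] at this
      have e : prefixWord j n = List.ofFn w' := by
        unfold prefixWord; congr 1; funext k; exact hj k
      unfold strip at this
      rw [e, ← cylF_eq hiw] at this
      exact this
    have hcb := H.card_bound (φ := φ) (M := M) n k k.2 i hiG (T k) (by
      intro w' hw'
      simp only [T, Finset.mem_filter, Finset.mem_univ, true_and] at hw'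
      obtain ⟨h1, h2, i', ⟨hi1, hi2⟩, hi3⟩ := hw'
      refine ⟨fun j hj m hm => ?_, i', ?_, hi3⟩
      · have hmn : m < n := hm.trans k.2
        have := h1 ⟨m, hmn⟩ hm
        have e1 := hj ⟨m, hmn⟩
        have e2 := hiw ⟨m, hmn⟩
        simp only at e1 e2
        rw [e1, e2, this]
      · rw [← cylF_eq hiw]; exact hi1)
    have hnk : n - k = p := by omega
    calc ∑ w' ∈ T k, f w' ≤ ∑ w' ∈ T k, (1 / (N : ℝ≥0∞)) ^ n * ENNReal.ofReal (M * (2 * (c₃ * (b / c) ^ p))) :=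
          Finset.sum_le_sum hpb
      _ = ((T k).card * (1 / (N : ℝ≥0∞)) ^ n) * ENNReal.ofReal (M * (2 * (c₃ * (b / c) ^ p))) := by
          rw [Finset.sum_const, nsmul_eq_mul, mul_assoc]
      _ ≤ ((1 / (N : ℝ≥0∞)) ^ (k:ℕ) * ENNReal.ofReal (M * (2 * c ^ (n - k)))) *
            ENNReal.ofReal (M * (2 * (c₃ * (b / c) ^ p))) := by gcongr
      _ = (1 / (N : ℝ≥0∞)) ^ n * ENNReal.ofReal (4 * c₃ * M ^ 2 * (N * b) ^ (n - k)) := by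
          rw [hnk]
          have e1 : (1 / (N : ℝ≥0∞)) ^ (k:ℕ) = (1 / (N : ℝ≥0∞)) ^ n * (N : ℝ≥0∞) ^ p := by
            conv_rhs => rw [hp, pow_add, mul_assoc, mul_comm ((1 / (N : ℝ≥0∞)) ^ p), H.Npow, mul_one]
          rw [e1, mul_assoc, mul_assoc, ← ENNReal.ofReal_mul (by positivity), ← ENNReal.ofReal_natCast,
            ← ENNReal.ofReal_pow (by positivity), ← ENNReal.ofReal_mul (by positivity)]
          congr 2
          rw [div_pow, mul_pow]
          field_simp
          ring
  calc ∑ w', f w' ≤ ∑ w', ((if w' = w then f w' else 0) + ∑ k, if w' ∈ T k then f w' else 0) :=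
        Finset.sum_le_sum fun w' _ => hstep w'
    _ = f w + ∑ k, ∑ w' ∈ T k, f w' := by
        rw [Finset.sum_add_distrib, Finset.sum_comm]
        simp
    _ ≤ (1 / (N : ℝ≥0∞)) ^ n +
        ∑ k : Fin n, (1 / (N : ℝ≥0∞)) ^ n * ENNReal.ofReal (4 * c₃ * M ^ 2 * (N * b) ^ (n - k)) :=
        add_le_add hf1 (Finset.sum_le_sum fun k _ => hTk k)
    _ = _ := by rw [mul_add, mul_one, Finset.mul_sum]

end count

section borelcantelli
variable {N : ℕ} {b c : ℝ} {u v d : Fin N → ℝ} {Pi : (ℕ → Fin N) → ℝ × ℝ}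
    {μ : Measure (ℕ → Fin N)}

open Classical in
/-- the words whose strip contains a given point -/
def Wd (c b : ℝ) (u v d : Fin N → ℝ) (n : ℕ) (z : ℝ × ℝ) : Finset (Fin n → Fin N) :=
  Finset.univ.filter fun w => z ∈ Sword c b u v d (List.ofFn w) '' unitSq

lemma mem_Wd {n : ℕ} {z : ℝ × ℝ} {w : Fin n → Fin N} :
    w ∈ Wd c b u v d n z ↔ z ∈ Sword c b u v d (List.ofFn w) '' unitSq := by
  simp [Wd]

lemma measurableSet_stripF (c b : ℝ) (u v d : Fin N → ℝ) {n : ℕ} (w : Fin n → Fin N) :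
    MeasurableSet (Sword c b u v d (List.ofFn w) '' unitSq) :=
  (isCompact_unitSq.image (continuous_Sword c b u v d _)).measurableSet

lemma card_Wd (n : ℕ) (z : ℝ × ℝ) : ((Wd c b u v d n z).card : ℝ≥0∞) =
    ∑ w : Fin n → Fin N, (Sword c b u v d (List.ofFn w) '' unitSq).indicator (fun _ => 1) z := by
  classical
  rw [Finset.card_eq_sum_ones, Wd, Finset.sum_filter]
  push_cast
  refine Finset.sum_congr rfl fun w _ => ?_
  rw [Set.indicator_apply]

lemma measurable_card_Wd (n : ℕ) : Measurable fun z => ((Wd c b u v d n z).card : ℝ≥0∞) := by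
  simp_rw [card_Wd]
  exact Finset.measurable_fun_sum _ fun w _ => measurable_const.indicator (measurableSet_stripF c b u v d w)

lemma sum_pow_le {r : ℝ} (h0 : 0 ≤ r) (h1 : r < 1) (n : ℕ) : ∑ k : Fin n, r ^ (n - (k:ℕ)) ≤ (1 - r)⁻¹ := by
  rw [Fin.sum_univ_eq_sum_range (fun k => r ^ (n - k)) n]
  have e : ∑ k ∈ Finset.range n, r ^ (n - k) = ∑ k ∈ Finset.range n, r ^ (k + 1) := by
    rw [← Finset.sum_range_reflect]
    refine Finset.sum_congr rfl fun k hk => ?_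
    rw [Finset.mem_range] at hk
    congr 1; omega
  rw [e, ← tsum_geometric_of_lt_one h0 h1]
  refine le_trans (Finset.sum_le_sum fun k _ => ?_)
    ((summable_geometric_of_lt_one h0 h1).sum_le_tsum (Finset.range n) fun _ _ => by positivity)
  exact pow_le_pow_of_le_one h0 h1.le (by omega)

lemma Hyp.measurableSet_Gd (H : Hyp b c u v d Pi μ) {φ : ℝ → ℝ≥0∞} (hφ : Measurable φ) (n : ℕ) (M : ℝ) :
    MeasurableSet (Gd c Pi (μ.map (fun i => (Pi i).1)) φ n M) := by
  have := H.prob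
  have : IsProbabilityMeasure (μ.map (fun i => (Pi i).1)) :=
    Measure.isProbabilityMeasure_map H.measurable_X.aemeasurable
  have hX : ∀ k, Measurable fun i => (Pi (sft k i)).1 := fun k => H.measurable_X.comp (measurable_sft k)
  have h1 : MeasurableSet {i | φ (Pi (sft n i)).1 ≤ ENNReal.ofReal M} :=
    measurableSet_le (hφ.comp (hX n)) measurable_const
  have h2 : MeasurableSet (⋂ k : ℕ, ⋂ _ : k < n, {i | μ.map (fun i => (Pi i).1)
      (Metric.closedBall (Pi (sft k i)).1 (2 * c ^ (n - k))) ≤ ENNReal.ofReal (M * (2 * c ^ (n - k)))}) :=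
    MeasurableSet.iInter fun k => MeasurableSet.iInter fun _ =>
      measurableSet_le ((measurable_ball_measure _).comp (hX k)) measurable_const
  convert h1.inter h2 using 1
  ext i
  simp [Gd]

lemma Hyp.Z_int (H : Hyp b c u v d Pi μ) {c₃ : ℝ} (h30 : 0 < c₃)
    (h3 : ∀ (n : ℕ) (i j : ℕ → Fin N), i 0 ≠ j 0 →
    Metric.diam (Prod.fst '' (Sword c b u v d (prefixWord i n) '' unitSq ∩
      Sword c b u v d (prefixWord j n) '' unitSq)) < c₃ * b ^ n)
    {φ : ℝ → ℝ≥0∞} (hφ : Measurable φ)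
    (hm : μ.map (fun i => (Pi i).1) = volume.withDensity φ) {M : ℝ} (hM : 1 ≤ M) (n : ℕ) :
    ∫⁻ i in Gd c Pi (μ.map (fun i => (Pi i).1)) φ n M, ((Wd c b u v d n (Pi i)).card : ℝ≥0∞) ∂μ ≤
      ENNReal.ofReal ((1 + 4 * c₃ * (1 - N * b)⁻¹) * M ^ 2) := by
  have hb0 := H.hb0
  have hGm := H.measurableSet_Gd hφ n M
  set G := Gd c Pi (μ.map (fun i => (Pi i).1)) φ n M with hG
  have hSm : ∀ w : Fin n → Fin N, MeasurableSet (Pi ⁻¹' (Sword c b u v d (List.ofFn w) '' unitSq)) :=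
    fun w => H.measurable_Pi (measurableSet_stripF c b u v d w)
  have hsum : ∑ k : Fin n, ENNReal.ofReal (4 * c₃ * M ^ 2 * (N * b) ^ (n - (k:ℕ))) ≤
      ENNReal.ofReal (4 * c₃ * M ^ 2 * (1 - N * b)⁻¹) := by
    rw [← ENNReal.ofReal_sum_of_nonneg (fun k _ => by positivity), ← Finset.mul_sum]
    apply ENNReal.ofReal_le_ofReal
    have := sum_pow_le (r := N * b) (by positivity) H.hNb n
    gcongr
  calc ∫⁻ i in G, ((Wd c b u v d n (Pi i)).card : ℝ≥0∞) ∂μ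
      = ∑ w' : Fin n → Fin N, μ (G ∩ Pi ⁻¹' (Sword c b u v d (List.ofFn w') '' unitSq)) := by
        simp_rw [card_Wd]
        rw [lintegral_finsetSum]
        · refine Finset.sum_congr rfl fun w _ => ?_
          have : (fun i => (Sword c b u v d (List.ofFn w) '' unitSq).indicator (fun _ => (1:ℝ≥0∞)) (Pi i)) =
            (Pi ⁻¹' (Sword c b u v d (List.ofFn w) '' unitSq)).indicator (fun _ => 1) := by
            rfl
          rw [this, lintegral_indicator (hSm w), lintegral_const, Measure.restrict_apply .univ, one_mul,
            univ_inter, Measure.restrict_apply (hSm w), inter_comm]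
        · intro w _
          exact (measurable_const.indicator (measurableSet_stripF c b u v d w)).comp H.measurable_Pi
    _ = ∑ w : Fin n → Fin N, ∑ w' : Fin n → Fin N,
          μ (cylF w ∩ G ∩ Pi ⁻¹' (Sword c b u v d (List.ofFn w') '' unitSq)) := by
        rw [Finset.sum_comm]
        refine Finset.sum_congr rfl fun w' _ => ?_
        rw [measure_eq_sum_cyl n (hGm.inter (hSm w'))]
        exact Finset.sum_congr rfl fun w _ => by rw [Set.inter_assoc]
    _ ≤ ∑ w : Fin n → Fin N, (1 / (N : ℝ≥0∞)) ^ n *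
          (1 + ENNReal.ofReal (4 * c₃ * M ^ 2 * (1 - N * b)⁻¹)) := by
        refine Finset.sum_le_sum fun w _ => ?_
        refine (H.word_sum h30 h3 hφ hm (by linarith) n w).trans ?_
        gcongr
    _ = 1 + ENNReal.ofReal (4 * c₃ * M ^ 2 * (1 - N * b)⁻¹) := by
        rw [Finset.sum_const, Finset.card_univ]
        simp only [Fintype.card_fun, Fintype.card_fin, nsmul_eq_mul, Nat.cast_pow]
        rw [← mul_assoc, H.Npow, one_mul]
    _ ≤ _ := by
        have h1b : 0 ≤ (1 - N * b)⁻¹ := inv_nonneg.2 (by linarith [H.hNb])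
        rw [← ENNReal.ofReal_one, ← ENNReal.ofReal_add (by norm_num) (by positivity)]
        apply ENNReal.ofReal_le_ofReal
        have : 1 ≤ M ^ 2 := one_le_pow₀ hM
        nlinarith

lemma Hyp.Z_large (H : Hyp b c u v d Pi μ) {c₃ : ℝ} (h30 : 0 < c₃)
    (h3 : ∀ (n : ℕ) (i j : ℕ → Fin N), i 0 ≠ j 0 →
    Metric.diam (Prod.fst '' (Sword c b u v d (prefixWord i n) '' unitSq ∩
      Sword c b u v d (prefixWord j n) '' unitSq)) < c₃ * b ^ n)
    {φ : ℝ → ℝ≥0∞} (hφ : Measurable φ)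
    (hm : μ.map (fun i => (Pi i).1) = volume.withDensity φ) {M : ℝ} (hM : 1 ≤ M) (n : ℕ) :
    μ ({i | ENNReal.ofReal (M ^ 3) ≤ ((Wd c b u v d n (Pi i)).card : ℝ≥0∞)} ∩
      Gd c Pi (μ.map (fun i => (Pi i).1)) φ n M) ≤
      ENNReal.ofReal ((1 + 4 * c₃ * (1 - N * b)⁻¹) * M⁻¹) := by
  have hM0 : 0 < M := by linarith
  have hmZ : Measurable fun i => ((Wd c b u v d n (Pi i)).card : ℝ≥0∞) :=
    (measurable_card_Wd n).comp H.measurable_Pi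
  have h1 := mul_meas_ge_le_lintegral (μ := μ.restrict (Gd c Pi (μ.map (fun i => (Pi i).1)) φ n M))
    hmZ (ENNReal.ofReal (M ^ 3))
  rw [Measure.restrict_apply (measurableSet_le measurable_const hmZ)] at h1
  have h2 := h1.trans (H.Z_int h30 h3 hφ hm hM n)
  have hM3 : ENNReal.ofReal (M ^ 3) ≠ 0 := by simpa using by positivity
  rw [mul_comm, ← ENNReal.le_div_iff_mul_le (Or.inl hM3) (Or.inl ENNReal.ofReal_ne_top),
    ← ENNReal.ofReal_div_of_pos (by positivity)] at h2
  refine h2.trans (le_of_eq ?_)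
  congr 1
  field_simp

lemma Hyp.Gd_compl (H : Hyp b c u v d Pi μ) {q : ℝ} (hq : 1 < q)
    {φ : ℝ → ℝ≥0∞} (hφ : Measurable φ)
    (hm : μ.map (fun i => (Pi i).1) = volume.withDensity φ) (hfin : (∫⁻ t, φ t ^ q) < ⊤)
    {τ : ℝ} (hτ : 1 < τ) : ∃ κ : ℝ≥0∞, κ < 1 ∧ ∃ C : ℝ≥0∞, C ≠ ⊤ ∧ ∀ n : ℕ,
      μ (Gd c Pi (μ.map (fun i => (Pi i).1)) φ n ((τ ^ n) ^ 2))ᶜ ≤ C * ((n + 1) * κ ^ n) := by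
  have := H.prob
  have hc0 := H.hc0
  have hτ0 : 0 < τ := by linarith
  have : IsProbabilityMeasure (μ.map (fun i => (Pi i).1)) :=
    Measure.isProbabilityMeasure_map H.measurable_X.aemeasurable
  obtain ⟨κ, hκ, C, hC, hb⟩ := geom_bound hq hφ hm hfin hτ
  refine ⟨κ, hκ, C, hC, fun n => ?_⟩
  set m := μ.map (fun i => (Pi i).1) with hmdef
  set M := (τ ^ n) ^ 2 with hM
  have hM0 : 0 < M := by positivity
  have hmap : ∀ k (A : Set ℝ), MeasurableSet A → μ (sft k ⁻¹' ((fun i => (Pi i).1) ⁻¹' A)) = m A := by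
    intro k A hA
    rw [H.inv k (H.measurable_X hA), hmdef, Measure.map_apply H.measurable_X hA]
  let A0 : Set ℝ := {t | ENNReal.ofReal M < φ t}
  let A : ℕ → Set ℝ := fun k => {t | ENNReal.ofReal (M * (2 * c ^ (n - k))) < m (Metric.closedBall t (2 * c ^ (n - k)))}
  have hA0 : MeasurableSet A0 := measurableSet_lt measurable_const hφ
  have hA : ∀ k, MeasurableSet (A k) := fun k => measurableSet_lt measurable_const (measurable_ball_measure _)
  have hsub : (Gd c Pi m φ n M)ᶜ ⊆ sft n ⁻¹' ((fun i => (Pi i).1) ⁻¹' A0) ∪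
      ⋃ k ∈ Finset.range n, sft k ⁻¹' ((fun i => (Pi i).1) ⁻¹' (A k)) := by
    intro i hi
    by_contra hcon
    apply hi
    simp only [mem_union, mem_iUnion, Finset.mem_range, not_or, not_exists, mem_preimage, A0, A,
      mem_ofPred_eq, not_lt] at hcon
    exact ⟨hcon.1, hcon.2⟩
  calc μ (Gd c Pi m φ n M)ᶜ ≤ _ := measure_mono hsub
    _ ≤ μ (sft n ⁻¹' ((fun i => (Pi i).1) ⁻¹' A0)) +
        ∑ k ∈ Finset.range n, μ (sft k ⁻¹' ((fun i => (Pi i).1) ⁻¹' (A k))) :=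
        (measure_union_le _ _).trans (add_le_add le_rfl (measure_biUnion_finset_le _ _))
    _ ≤ C * κ ^ n + ∑ k ∈ Finset.range n, C * κ ^ n := by
        refine add_le_add ?_ (Finset.sum_le_sum fun k _ => ?_)
        · rw [hmap n A0 hA0]
          exact hb n A0 hA0 (volume_dens_large hφ hm hM0)
        · rw [hmap k _ (hA k)]
          exact hb n _ (hA k) (volume_ball_large hM0 (by positivity))
    _ = C * ((n + 1) * κ ^ n) := by
        rw [Finset.sum_const, Finset.card_range, nsmul_eq_mul]
        ring

lemma tsum_succ_mul_pow_ne_top {κ : ℝ≥0∞} (hκ : κ < 1) : ∑' n : ℕ, ((n + 1 : ℝ≥0∞) * κ ^ n) ≠ ⊤ := by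
  have hk : ‖κ.toReal‖ < 1 := by
    rw [Real.norm_of_nonneg ENNReal.toReal_nonneg]
    rw [← ENNReal.toReal_one]
    exact (ENNReal.toReal_lt_toReal (by exact (hκ.trans ENNReal.one_lt_top).ne) (by simp)).2 hκ
  have h1 := summable_pow_mul_geometric_of_norm_lt_one 1 hk
  have h2 := summable_geometric_of_norm_lt_one hk
  have h3 := (h1.add h2).tsum_ofReal_ne_top
  convert h3 using 3 with n
  have hkt : κ ≠ ⊤ := (hκ.trans ENNReal.one_lt_top).ne
  rw [← add_one_mul, pow_one, ENNReal.ofReal_mul (by positivity), ENNReal.ofReal_add (by positivity) (by norm_num),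
    ENNReal.ofReal_pow ENNReal.toReal_nonneg, ENNReal.ofReal_toReal hkt]
  simp

lemma Hyp.good_ae (H : Hyp b c u v d Pi μ) {c₃ : ℝ} (h30 : 0 < c₃)
    (h3 : ∀ (n : ℕ) (i j : ℕ → Fin N), i 0 ≠ j 0 →
    Metric.diam (Prod.fst '' (Sword c b u v d (prefixWord i n) '' unitSq ∩
      Sword c b u v d (prefixWord j n) '' unitSq)) < c₃ * b ^ n)
    {q : ℝ} (hq : 1 < q)
    {φ : ℝ → ℝ≥0∞} (hφ : Measurable φ)
    (hm : μ.map (fun i => (Pi i).1) = volume.withDensity φ) (hfin : (∫⁻ t, φ t ^ q) < ⊤)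
    {τ : ℝ} (hτ : 1 < τ) : ∀ᵐ i ∂μ, ∀ᶠ n in atTop,
      φ (Pi (sft n i)).1 ≤ ENNReal.ofReal ((τ ^ n) ^ 2) ∧
      ((Wd c b u v d n (Pi i)).card : ℝ≥0∞) ≤ ENNReal.ofReal (((τ ^ n) ^ 2) ^ 3) := by
  have hτ0 : 0 < τ := by linarith
  obtain ⟨κ, hκ, C, hC, hG⟩ := H.Gd_compl hq hφ hm hfin hτ
  let G : ℕ → Set (ℕ → Fin N) := fun n => Gd c Pi (μ.map (fun i => (Pi i).1)) φ n ((τ ^ n) ^ 2)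
  have s1 : ∑' n, μ (G n)ᶜ ≠ ⊤ := by
    refine ne_top_of_le_ne_top ?_ (ENNReal.tsum_le_tsum hG)
    rw [ENNReal.tsum_mul_left]
    exact ENNReal.mul_ne_top hC (tsum_succ_mul_pow_ne_top hκ)
  have s2 : ∑' n, μ ({i | ENNReal.ofReal (((τ ^ n) ^ 2) ^ 3) ≤ ((Wd c b u v d n (Pi i)).card : ℝ≥0∞)} ∩
      G n) ≠ ⊤ := by
    have hle : ∀ n, μ ({i | ENNReal.ofReal (((τ ^ n) ^ 2) ^ 3) ≤ ((Wd c b u v d n (Pi i)).card : ℝ≥0∞)} ∩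
      G n) ≤ ENNReal.ofReal ((1 + 4 * c₃ * (1 - N * b)⁻¹) * ((τ ^ n) ^ 2)⁻¹) := fun n =>
        H.Z_large h30 h3 hφ hm (one_le_pow₀ (one_le_pow₀ hτ.le)) n
    refine ne_top_of_le_ne_top ?_ (ENNReal.tsum_le_tsum hle)
    apply Summable.tsum_ofReal_ne_top
    apply Summable.mul_left
    have : (fun n : ℕ => ((τ ^ n) ^ 2)⁻¹) = fun n => ((τ ^ 2)⁻¹) ^ n := by
      funext n; rw [← pow_mul, mul_comm, pow_mul, inv_pow]
    rw [this]
    apply summable_geometric_of_lt_one (by positivity)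
    rw [inv_lt_one_iff₀]; right
    exact one_lt_pow₀ hτ (by norm_num)
  filter_upwards [ae_eventually_notMem s1, ae_eventually_notMem s2] with i h1 h2
  filter_upwards [h1, h2] with n g1 g2
  rw [mem_compl_iff, not_not] at g1
  refine ⟨g1.1, ?_⟩
  by_contra hcon
  push Not at hcon
  exact g2 ⟨hcon.le, g1⟩

end borelcantelli

section lower
variable {N : ℕ} {b c : ℝ} {u v d : Fin N → ℝ} {Pi : (ℕ → Fin N) → ℝ × ℝ}
    {μ : Measure (ℕ → Fin N)}

lemma Hyp.ball_bound (H : Hyp b c u v d Pi μ)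
    {φ : ℝ → ℝ≥0∞} (hφ : Measurable φ)
    (hm : μ.map (fun i => (Pi i).1) = volume.withDensity φ) {M r : ℝ} (hM : 0 < M)
    (l : ℕ) (z : ℝ × ℝ) (S : Set (ℕ → Fin N))
    (hS : ∀ j ∈ S, z ∈ strip c b u v d l j ∧ |(Pi j).1 - z.1| ≤ r ∧ φ (Pi (sft l j)).1 ≤ ENNReal.ofReal M) :
    μ S ≤ (Wd c b u v d l z).card * ((1 / (N : ℝ≥0∞)) ^ l * ENNReal.ofReal (M * (2 * (r / c ^ l)))) := by
  have hc0 := H.hc0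
  have hcl := pow_pos hc0 l
  choose U hU using fun w : Fin l → Fin N => Sword_fst c b u v d (List.ofFn w)
  let A : (Fin l → Fin N) → Set ℝ := fun w =>
    Metric.closedBall ((z.1 - U w) / c ^ l) (r / c ^ l) ∩ {t | φ t ≤ ENNReal.ofReal M}
  have hA : ∀ w, MeasurableSet (A w) := fun w =>
    Metric.isClosed_closedBall.measurableSet.inter (measurableSet_le hφ measurable_const)
  have hsub : S ⊆ ⋃ w ∈ Wd c b u v d l z, cylF w ∩ sft l ⁻¹' ((fun i => (Pi i).1) ⁻¹' (A w)) := by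
    intro j hj
    obtain ⟨h1, h2, h3⟩ := hS j hj
    simp only [mem_iUnion]
    refine ⟨fun k => j k, mem_Wd.2 h1, fun k => rfl, ?_, h3⟩
    rw [Metric.mem_closedBall, Real.dist_eq]
    have e : (Pi j).1 = c ^ l * (Pi (sft l j)).1 + U (fun k => j k) := by
      rw [H.Pi_eq l j]
      have := hU (fun k => j k) (Pi (sft l j))
      rw [List.length_ofFn] at this
      exact this
    rw [e] at h2
    rw [le_div_iff₀ hcl, show |(Pi (sft l j)).1 - (z.1 - U (fun k => j k)) / c ^ l| * c ^ l =
      |((Pi (sft l j)).1 - (z.1 - U (fun k => j k)) / c ^ l) * c ^ l| by rw [abs_mul, abs_of_pos hcl]]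
    have e5 : ((Pi (sft l j)).1 - (z.1 - U (fun k => j k)) / c ^ l) * c ^ l =
        c ^ l * (Pi (sft l j)).1 + U (fun k => j k) - z.1 := by
      rw [sub_mul, div_mul_cancel₀ _ hcl.ne']; ring
    rw [e5]
    exact h2
  refine (measure_mono hsub).trans ((measure_biUnion_finset_le _ _).trans ?_)
  rw [← nsmul_eq_mul, ← Finset.sum_const]
  refine Finset.sum_le_sum fun w _ => ?_
  rw [H.indep w (H.measurable_X (hA w)), ← Measure.map_apply H.measurable_X (hA w)]
  gcongr
  refine (trunc_bound hφ hm _ _).trans ?_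
  rw [Real.volume_closedBall, ← ENNReal.ofReal_mul hM.le]

lemma mass_dist {m : Measure (ℝ × ℝ)} {C ε : ℝ≥0∞} {t : ℝ} (hC0 : C ≠ 0) (hC : C ≠ ⊤) (hε : 0 < ε)
    (h : ∀ F, IsClosed F → Metric.ediam F ≤ ε → m F ≤ C * Metric.ediam F ^ t) (A : Set (ℝ × ℝ))
    (hA : μH[t] A = 0) : m A = 0 := by
  have h1 : C⁻¹ • m ≤ μH[t] := by
    refine Measure.le_hausdorffMeasure t _ ε hε fun s hs => ?_
    have h2 := h (closure s) isClosed_closure (by rwa [Metric.ediam_closure])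
    rw [Metric.ediam_closure] at h2
    rw [Measure.smul_apply, smul_eq_mul, ENNReal.inv_mul_le_iff hC0 hC]
    exact (measure_mono subset_closure).trans h2
  have h2 := h1 A
  rw [hA, Measure.smul_apply, smul_eq_mul] at h2
  have h3 := le_antisymm h2 zero_le
  rcases mul_eq_zero.1 h3 with h4 | h4
  · exact absurd h4 (ENNReal.inv_ne_zero.2 hC)
  · exact h4

lemma Hyp.lower (H : Hyp b c u v d Pi μ) {c₃ : ℝ} (h30 : 0 < c₃)
    (h3 : ∀ (n : ℕ) (i j : ℕ → Fin N), i 0 ≠ j 0 →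
    Metric.diam (Prod.fst '' (Sword c b u v d (prefixWord i n) '' unitSq ∩
      Sword c b u v d (prefixWord j n) '' unitSq)) < c₃ * b ^ n)
    {q : ℝ} (hq : 1 < q)
    {φ : ℝ → ℝ≥0∞} (hφ : Measurable φ)
    (hm : μ.map (fun i => (Pi i).1) = volume.withDensity φ) (hfin : (∫⁻ t, φ t ^ q) < ⊤)
    {t : ℝ} (ht0 : 0 < t) (hts : t < sdim N b c) (A : Set (ℝ × ℝ)) (hA : μ.map Pi Aᶜ = 0) :
    μH[t] A ≠ 0 := by
  intro hA0
  have hprob := H.prob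
  have hb0 := H.hb0
  have hb1 := H.hb1
  have hc0 := H.hc0
  have hN0 : (0:ℝ) < N := by have := H.hN; positivity
  have hac : μ.map (fun i => (Pi i).1) ≪ volume := by
    rw [hm]; exact withDensity_absolutelyContinuous _ _
  set s := sdim N b c with hs
  set η := b ^ ((s - t) / (7 + t)) with hη
  have hη0 : 0 < η := Real.rpow_pos_of_pos hb0 _
  have hη1 : η < 1 := Real.rpow_lt_one hb0.le hb1 (div_pos (by linarith) (by linarith))
  have hηt : η ^ 7 * (η * b) ^ t * (N * c) = b := by
    have e1 : η ^ 7 * (η * b) ^ t = b ^ s := by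
      rw [Real.mul_rpow hη0.le hb0.le, ← Real.rpow_natCast η 7, ← mul_assoc, ← Real.rpow_add hη0, hη,
        ← Real.rpow_mul hb0.le, ← Real.rpow_add hb0]
      congr 1
      have : 7 + t ≠ 0 := by linarith
      push_cast
      field_simp
      ring
    rw [e1]; exact H.b_rpow
  set ψ := η * b with hψ
  have hψ0 : 0 < ψ := by positivity
  have hψ1 : ψ < 1 := by nlinarith
  have hτ : 1 < η⁻¹ := (one_lt_inv₀ hη0).2 hη1
  obtain ⟨h, h0, hdeep⟩ := H.depth_ae hac h3 hη0 hη1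
  have hgood := H.good_ae h30 h3 hq hφ hm hfin hτ
  obtain ⟨K, hK, hKs⟩ := H.mem_strip_of_deep
  set a := h / K with ha
  have ha0 : 0 < a := by positivity
  let G : ℕ → Set (ℕ → Fin N) := fun n0 => {i | ∀ n ≥ n0, deep (h * η ^ n) (Pi (sft n i)) ∧
    φ (Pi (sft n i)).1 ≤ ENNReal.ofReal ((η⁻¹ ^ n) ^ 2) ∧
      ((Wd c b u v d n (Pi i)).card : ℝ≥0∞) ≤ ENNReal.ofReal (((η⁻¹ ^ n) ^ 2) ^ 3)}
  obtain ⟨n0, hn0⟩ : ∃ n0, μ (G n0) ≠ 0 := by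
    by_contra hcon
    push Not at hcon
    have h1 : μ (⋃ n, G n) = 0 := measure_iUnion_null hcon
    have h2 : ∀ᵐ i ∂μ, i ∈ ⋃ n, G n := by
      filter_upwards [hdeep, hgood] with i g1 g2
      obtain ⟨n0, hn0⟩ := eventually_atTop.1 (g1.and g2)
      exact mem_iUnion.2 ⟨n0, fun n hn => ⟨(hn0 n hn).1, (hn0 n hn).2.1, (hn0 n hn).2.2⟩⟩
    have h4 : ∀ᵐ i ∂μ, i ∉ ⋃ n, G n := measure_eq_zero_iff_ae_notMem.1 h1
    have h5 : ∀ᵐ i ∂μ, False := by filter_upwards [h2, h4] with i g1 g2 using g2 g1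
    rw [ae_iff] at h5
    simp at h5
  have hball : ∀ l ≥ n0, ∀ i ∈ G n0, ∀ S : Set (ℕ → Fin N), S ⊆ G n0 →
      (∀ j ∈ S, dist (Pi i) (Pi j) ≤ a * ψ ^ l) → μ S ≤ ENNReal.ofReal (2 * a * (ψ ^ t) ^ l) := by
    intro l hl i hi S hS hdist
    have hM : 0 < (η⁻¹ ^ l) ^ 2 := by positivity
    have hb := H.ball_bound (r := a * ψ ^ l) hφ hm hM l (Pi i) S (fun j hj => by
      have gj := hS hj l hl
      have hd := hdist j hj
      refine ⟨hKs l j (h * η ^ l) (Pi i) gj.1 (hd.trans (le_of_eq ?_)), ?_, gj.2.1⟩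
      · rw [ha, hψ, mul_pow]; field_simp
      · rw [Prod.dist_eq, max_le_iff, Real.dist_eq, abs_sub_comm] at hd
        exact hd.1)
    refine hb.trans ?_
    have hcd := (hi l hl).2.2
    calc _ ≤ ENNReal.ofReal (((η⁻¹ ^ l) ^ 2) ^ 3) * ((1 / (N : ℝ≥0∞)) ^ l *
            ENNReal.ofReal ((η⁻¹ ^ l) ^ 2 * (2 * (a * ψ ^ l / c ^ l)))) := by gcongr
      _ = ENNReal.ofReal (2 * a * (ψ ^ t) ^ l) := by
        have e : (1 / (N : ℝ≥0∞)) ^ l = ENNReal.ofReal ((1 / (N:ℝ)) ^ l) := by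
          rw [ENNReal.ofReal_pow (by positivity), ENNReal.ofReal_div_of_pos hN0]; simp
        rw [e, ← ENNReal.ofReal_mul (by positivity), ← ENNReal.ofReal_mul (by positivity)]
        congr 1
        have e2 : ψ ^ t = b / (η ^ 7 * (N * c)) := by
          rw [eq_div_iff (by positivity)]; linarith
        rw [e2, hψ]
        simp only [div_pow, mul_pow, inv_pow, one_pow]
        field_simp
        ring
  set C := 2 * a * (ψ ^ t)⁻¹ * (a ^ t)⁻¹ with hC
  have hψt : 0 < ψ ^ t := Real.rpow_pos_of_pos hψ0 _
  have hat : 0 < a ^ t := Real.rpow_pos_of_pos ha0 _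
  have hC0 : 0 < C := by positivity
  have hψt1 : ψ ^ t < 1 := Real.rpow_lt_one hψ0.le hψ1 ht0
  have hmass := mass_dist (m := (μ.restrict (G n0)).map Pi) (C := ENNReal.ofReal C)
    (ε := ENNReal.ofReal (a * ψ ^ n0)) (t := t) (by simpa using hC0) (by simp)
    (by simp only [ENNReal.ofReal_pos]; positivity) (by
      intro F hF hFd
      rw [Measure.map_apply H.measurable_Pi hF.measurableSet,
        Measure.restrict_apply (H.measurable_Pi hF.measurableSet)]
      rcases (Pi ⁻¹' F ∩ G n0).eq_empty_or_nonempty with he | ⟨i, hiF, hiG⟩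
      · rw [he, measure_empty]; exact zero_le
      have hFt : Metric.ediam F ≠ ⊤ := ne_top_of_le_ne_top ENNReal.ofReal_ne_top hFd
      obtain ⟨D, hD0, hDe⟩ : ∃ D : ℝ, 0 ≤ D ∧ Metric.ediam F = ENNReal.ofReal D :=
        ⟨(Metric.ediam F).toReal, ENNReal.toReal_nonneg, (ENNReal.ofReal_toReal hFt).symm⟩
      have hdist : ∀ j ∈ Pi ⁻¹' F ∩ G n0, dist (Pi i) (Pi j) ≤ D := by
        intro j hj
        have := Metric.edist_le_ediam_of_mem (s := F) (x := Pi i) (y := Pi j) hiF hj.1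
        rw [hDe, edist_dist] at this
        exact (ENNReal.ofReal_le_ofReal_iff hD0).1 this
      rw [hDe] at hFd ⊢
      rw [ENNReal.ofReal_le_ofReal_iff (by positivity)] at hFd
      rcases hD0.eq_or_lt with hD | hD
      · have hlim : Tendsto (fun l => ENNReal.ofReal (2 * a * (ψ ^ t) ^ l)) atTop (𝓝 0) := by
          have : Tendsto (fun l => 2 * a * (ψ ^ t) ^ l) atTop (𝓝 (2 * a * 0)) :=
            (tendsto_pow_atTop_nhds_zero_of_lt_one hψt.le hψt1).const_mul _
          rw [mul_zero] at this
          simpa using ENNReal.tendsto_ofReal this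
        have : μ (Pi ⁻¹' F ∩ G n0) ≤ 0 := by
          refine ge_of_tendsto hlim ?_
          filter_upwards [eventually_ge_atTop n0] with l hl
          refine hball l hl i hiG _ inter_subset_right fun j hj => (hdist j hj).trans ?_
          rw [← hD]; positivity
        exact this.trans zero_le
      · have hx0 : 0 < D / a := by positivity
        have hxn : D / a ≤ ψ ^ n0 := by rw [div_le_iff₀ ha0]; linarith
        have hx1 : D / a ≤ 1 := hxn.trans (pow_le_one₀ hψ0.le hψ1.le)
        obtain ⟨l, hl1, hl2⟩ := exists_nat_pow_near_of_lt_one hx0 hx1 hψ0 hψ1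
        have hl : n0 ≤ l := by
          by_contra hcon
          push Not at hcon
          have : ψ ^ n0 ≤ ψ ^ (l + 1) := pow_le_pow_of_le_one hψ0.le hψ1.le hcon
          linarith
        refine (hball l hl i hiG _ inter_subset_right fun j hj => (hdist j hj).trans ?_).trans ?_
        · rw [div_le_iff₀ ha0] at hl2; linarith
        rw [ENNReal.ofReal_rpow_of_pos hD, ← ENNReal.ofReal_mul hC0.le]
        apply ENNReal.ofReal_le_ofReal
        have e1 : (ψ ^ t) ^ l = (ψ ^ t)⁻¹ * (ψ ^ (l + 1)) ^ t := by
          have e6 : (ψ ^ (l + 1)) ^ t = (ψ ^ t) ^ (l + 1) := by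
            rw [← Real.rpow_natCast_mul hψ0.le, ← Real.rpow_mul_natCast hψ0.le, mul_comm]
          rw [e6, pow_succ]
          field_simp
        have e2 : (ψ ^ (l + 1)) ^ t ≤ D ^ t / a ^ t := by
          rw [← Real.div_rpow hD0 ha0.le]
          exact Real.rpow_le_rpow (by positivity) hl1.le ht0.le
        rw [e1, hC]
        calc 2 * a * ((ψ ^ t)⁻¹ * (ψ ^ (l + 1)) ^ t) ≤ 2 * a * ((ψ ^ t)⁻¹ * (D ^ t / a ^ t)) := by gcongr
          _ = _ := by field_simp) A hA0
  apply hn0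
  have h1 : μ.restrict (G n0) (Pi ⁻¹' A) = 0 :=
    le_antisymm ((Measure.le_map_apply H.measurable_Pi.aemeasurable A).trans hmass.le) zero_le
  have h2 : μ.restrict (G n0) (Pi ⁻¹' Aᶜ) = 0 := by
    refine le_antisymm (((Measure.restrict_apply_le _ _).trans
      (Measure.le_map_apply H.measurable_Pi.aemeasurable Aᶜ)).trans hA.le) zero_le
  have h4 : μ.restrict (G n0) univ = 0 := by
    have : (univ : Set (ℕ → Fin N)) = Pi ⁻¹' A ∪ Pi ⁻¹' Aᶜ := by
      rw [← preimage_union, union_compl_self, preimage_univ]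
    rw [this]
    exact measure_union_null h1 h2
  rwa [Measure.restrict_apply_univ] at h4

end lower

/-- under Assumption A, `dim_H Λ = dim_H ν = 1 + log(Nc)/(-log b)`. -/
theorem statement3 (N : ℕ) (hN : 2 ≤ N) (b c : ℝ)
    (hb0 : 0 < b) (hb1 : b < 1) (hc0 : 0 < c) (hc1 : c < 1)
    (u v d : Fin N → ℝ)
    (hmaps : ∀ i, Smap c b u v d i '' unitSq ⊆ unitSq)
    (Pi : (ℕ → Fin N) → ℝ × ℝ)
    (hPi : ∀ i, Tendsto (fun n => Sword c b u v d (prefixWord i n) 0) atTop (nhds (Pi i)))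
    (μ : Measure (ℕ → Fin N)) (hμ : IsUniformBernoulli N μ)
    (ν : Measure (ℝ × ℝ)) (hν : ν = μ.map Pi)
    (νx : Measure ℝ) (hνx : νx = ν.map Prod.fst)
    (hA1 : 1 / (N : ℝ) < c) (hA2 : b < 1 / (N : ℝ))
    (hA3 : ∃ q > (1 : ℝ), HasLqDensity νx q)
    (hA4 : Transversality N c b u v d) :
    dimH (Set.range Pi) = ENNReal.ofReal (1 + Real.log ((N : ℝ) * c) / (-Real.log b)) ∧
    measureDimH ν = ENNReal.ofReal (1 + Real.log ((N : ℝ) * c) / (-Real.log b)) := by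
  have hN0 : (0 : ℝ) < N := by
    have : 0 < N := by omega
    exact_mod_cast this
  have H : Hyp b c u v d Pi μ :=
    { hN := hN, hb0 := hb0, hc1 := hc1, hbc := hA2.trans hA1
      hNb := by rw [lt_div_iff₀ hN0] at hA2; linarith
      hNc := by rw [div_lt_iff₀ hN0] at hA1; linarith
      hmaps := hmaps, hPi := hPi, hμ := hμ }
  subst hν
  subst hνx
  have hprob : IsProbabilityMeasure μ := hμ.1
  rw [Measure.map_map measurable_fst H.measurable_Pi] at hA3
  obtain ⟨q, hq, hd⟩ := hA3
  have hp2 : IsProbabilityMeasure (μ.map (Prod.fst ∘ Pi)) :=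
    Measure.isProbabilityMeasure_map (measurable_fst.comp H.measurable_Pi).aemeasurable
  obtain ⟨φ, hφ, hm, hfin⟩ := density_meas hq hd
  obtain ⟨c₃, h30, h3⟩ := hA4
  have hlow : ∀ A : Set (ℝ × ℝ), μ.map Pi Aᶜ = 0 → ENNReal.ofReal (sdim N b c) ≤ dimH A := by
    intro A hA
    refine le_of_forall_lt fun r hr => ?_
    obtain ⟨t, hrt, hts⟩ := ENNReal.lt_iff_exists_nnreal_btwn.1 hr
    refine hrt.trans_le ?_
    have ht0 : 0 < (t : ℝ) := by
      have h0 : (0 : ℝ≥0∞) < t := lt_of_le_of_lt zero_le hrt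
      exact_mod_cast h0
    have hts' : (t : ℝ) < sdim N b c := by
      rw [← ENNReal.ofReal_coe_nnreal] at hts
      exact (ENNReal.ofReal_lt_ofReal_iff H.sdim_pos).1 hts
    exact le_dimH_of_hausdorffMeasure_ne_zero
      (H.lower h30 h3 hq hφ hm hfin ht0 hts' A hA)
  have h1 : ENNReal.ofReal (sdim N b c) ≤ measureDimH (μ.map Pi) := le_iInf₂ hlow
  have h2 : measureDimH (μ.map Pi) ≤ dimH (Set.range Pi) := by
    refine iInf₂_le _ ?_
    rw [Measure.map_apply H.measurable_Pi H.isCompact_range.measurableSet.compl]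
    convert measure_empty (μ := μ)
    ext i
    simp
  have h3' := H.upper
  exact ⟨le_antisymm h3' (h1.trans h2), le_antisymm (h2.trans h3') h1⟩

end
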